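/- For every natural number N and every compact set K contained in the open unit disc 𝔻 ⊂ ℝ², there exists a constant C₁ = C₁(K, N) > 0 with the following property: whenever u and v are harmonic functions on 𝔻, neither identically zero, such that Z(u) = Z(v) and the number of connected components of 𝔻 ∖ Z(u) is less than N, then sup_{x ∈ K ∖ Z(u)} |u(x)/v(x)| ≤ C₁ · inf_{x ∈ K ∖ Z(u)} |u(x)/v(x)|. -/

import Mathlib

/-!
Write `u = re f` and `v = re g` with `f`, `g` holomorphic on the disc, and rescale `u` and `v` to
have maximum modulus `1` on a smaller disc. The estimate then follows by compactness, in two steps.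

The functions `f` form a normal family. At a zero of `re f` that is not a critical point of `f`, two
nodal domains touch, and the nodal domains linked by such crossings on one level set `im f = c` form
a forest: a closed curve through them would wind around a zero of `re f`, and on the set of zeros it
winds around `|im f - c|` could have no maximum, as `f` is open. Hence `f` takes all but countably
many values `c * I` at most `N` times. Choosing two such values, `f` omits both off at most `2 * N`
points, and Schottky's theorem on a ray and a circle avoiding these points bounds `f` locally
uniformly.

If `F k` and `G k` are normalized, with `re (F k)` vanishing wherever `re (G k)` does, and `G k`
tends to `g`, then `re (F k) = O(re (G k))` locally uniformly. On a small circle the zeros of `re g`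
are transverse, so the quotient of the real parts is bounded there, and the maximum principle on
each nodal domain carries the bound to the disc.
-/

open Metric Set Filter

noncomputable section

abbrev En (n : ℕ) : Type := EuclideanSpace ℝ (Fin n)

/-- The Laplacian of `u` at `x`, computed from the second iterated Fréchet derivative. -/
def laplacianAt {n : ℕ} (u : En n → ℝ) (x : En n) : ℝ :=
  ∑ i : Fin n, iteratedFDeriv ℝ 2 u x ![EuclideanSpace.single i 1, EuclideanSpace.single i 1]

/-- `u` is harmonic on `Ω`: twice continuously differentiable with vanishing Laplacian. -/
def HarmonicOnSet {n : ℕ} (u : En n → ℝ) (Ω : Set (En n)) : Prop :=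
  ContDiffOn ℝ 2 u Ω ∧ ∀ x ∈ Ω, laplacianAt u x = 0

/-- The zero set of `u` within `Ω`. -/
def zeroSet {n : ℕ} (u : En n → ℝ) (Ω : Set (En n)) : Set (En n) :=
  {x ∈ Ω | u x = 0}

/-- The collection of nodal domains of `u` in `Ω`, i.e. the connected components of
`Ω \ Z(u)`. -/
def nodalComponents {n : ℕ} (u : En n → ℝ) (Ω : Set (En n)) : Set (Set (En n)) :=
  {C | ∃ x ∈ Ω \ zeroSet u Ω, C = connectedComponentIn (Ω \ zeroSet u Ω) x}

section

open scoped NNReal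
open Asymptotics Complex Topology Function

/-! ### Bloch's theorem -/

section Bloch

variable {g : ℂ → ℂ} {a p : ℂ} {R ρ s : ℝ}

theorem norm_sub_sub_mul_deriv_le (hg : DifferentiableOn ℂ g (ball p s))
    (hg' : ∀ z ∈ ball p s, ‖deriv g z‖ ≤ 2 * ‖deriv g p‖) (hs : 0 < s) {z : ℂ}
    (hz : dist z p ≤ s / 6) :
    ‖g z - g p - (z - p) * deriv g p‖ ≤ ‖deriv g p‖ / 2 * ‖z - p‖ := by
  have hsub : closedBall p (s / 6) ⊆ ball p s := closedBall_subset_ball (by linarith)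
  have schwarz : ∀ w ∈ closedBall p (s / 6), ‖deriv g w - deriv g p‖ ≤ ‖deriv g p‖ / 2 := by
    intro w hw
    have hmaps : MapsTo (deriv g) (ball p s) (closedBall (deriv g p) (3 * ‖deriv g p‖)) := by
      intro w hw
      rw [mem_closedBall, dist_eq_norm]
      linarith [norm_sub_le (deriv g w) (deriv g p), hg' w hw]
    rw [← dist_eq_norm]
    calc dist (deriv g w) (deriv g p) ≤ 3 * ‖deriv g p‖ / s * dist w p :=
          dist_le_div_mul_dist_of_mapsTo_ball (hg.deriv isOpen_ball) hmaps (hsub hw)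
      _ ≤ 3 * ‖deriv g p‖ / s * (s / 6) := by gcongr; exact hw
      _ = ‖deriv g p‖ / 2 := by field_simp; ring
  have hderiv : ∀ w ∈ closedBall p (s / 6),
      HasDerivWithinAt (fun w ↦ g w - (w - p) * deriv g p) (deriv g w - deriv g p)
        (closedBall p (s / 6)) w := by
    intro w hw
    have h₁ := (hg.differentiableAt (isOpen_ball.mem_nhds (hsub hw))).hasDerivAt
    have h₂ := ((hasDerivAt_id w).sub_const p).mul_const (deriv g p)
    rw [one_mul] at h₂
    exact (h₁.fun_sub h₂).hasDerivWithinAt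
  have hmvt := (convex_closedBall p (s / 6)).norm_image_sub_le_of_norm_hasDerivWithin_le hderiv
    schwarz (mem_closedBall_self (by positivity)) hz
  rwa [sub_self, zero_mul, sub_zero, sub_right_comm] at hmvt

theorem ball_subset_image_of_norm_deriv_le (hg : DifferentiableOn ℂ g (ball p s))
    (hg' : ∀ z ∈ ball p s, ‖deriv g z‖ ≤ 2 * ‖deriv g p‖) :
    ball (g p) (s * ‖deriv g p‖ / 24) ⊆ g '' ball p s := by
  rcases le_or_gt (s * ‖deriv g p‖) 0 with h | hpos
  · rw [ball_eq_empty.2 (by linarith)]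
    exact empty_subset _
  have hs : 0 < s := pos_of_mul_pos_left hpos (norm_nonneg _)
  have hne : deriv g p ≠ 0 := norm_pos_iff.1 (pos_of_mul_pos_right hpos hs.le)
  have hsub : closedBall p (s / 6) ⊆ ball p s := closedBall_subset_ball (by linarith)
  have hsphere : ∀ z ∈ sphere p (s / 6), s * ‖deriv g p‖ / 12 ≤ ‖g z - g p‖ := by
    intro z hz
    rw [mem_sphere] at hz
    have h := norm_sub_sub_mul_deriv_le hg hg' hs hz.le
    have h' := norm_sub_norm_le ((z - p) * deriv g p) (g z - g p)
    rw [norm_sub_rev _ (g z - g p), norm_mul, ← dist_eq_norm, hz] at h'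
    rw [← dist_eq_norm z, hz] at h
    linarith
  have hd : HasDerivAt g (deriv g p) p :=
    (hg.differentiableAt (isOpen_ball.mem_nhds (mem_ball_self hs))).hasDerivAt
  have key := DiffContOnCl.ball_subset_image_closedBall
    ((hg.mono hsub).diffContOnCl_ball Subset.rfl) (by positivity : 0 < s / 6) hsphere
    ((hd.eventually_ne hne).frequently.filter_mono nhdsWithin_le_nhds)
  calc ball (g p) (s * ‖deriv g p‖ / 24)
      = ball (g p) (s * ‖deriv g p‖ / 12 / 2) := by ring_nf
    _ ⊆ g '' closedBall p (s / 6) := key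
    _ ⊆ g '' ball p s := image_mono hsub

theorem exists_ball_norm_deriv_le_two_mul (hg : DifferentiableOn ℂ g (ball a R))
    (hR : 0 < R) (ha : deriv g a ≠ 0) :
    ∃ p, ∃ s > 0, ball p s ⊆ ball a R ∧ (∀ z ∈ ball p s, ‖deriv g z‖ ≤ 2 * ‖deriv g p‖) ∧
      R / 2 * ‖deriv g a‖ ≤ 2 * s * ‖deriv g p‖ := by
  have hsub : closedBall a (R / 2) ⊆ ball a R := closedBall_subset_ball (by linarith)
  have ha_mem : a ∈ closedBall a (R / 2) := mem_closedBall_self (by positivity)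
  obtain ⟨p, -, hmax⟩ := (isCompact_closedBall a (R / 2)).exists_isMaxOn
    (f := fun z ↦ (R / 2 - dist z a) * ‖deriv g z‖) ⟨a, ha_mem⟩
    (ContinuousOn.mul (by fun_prop) ((hg.deriv isOpen_ball).continuousOn.mono hsub).norm)
  have hmax : ∀ z ∈ closedBall a (R / 2),
      (R / 2 - dist z a) * ‖deriv g z‖ ≤ (R / 2 - dist p a) * ‖deriv g p‖ := hmax
  have hpa : R / 2 * ‖deriv g a‖ ≤ (R / 2 - dist p a) * ‖deriv g p‖ := by
    simpa only [dist_self, sub_zero] using hmax a ha_mem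
  have hs : 0 < (R / 2 - dist p a) / 2 := by
    have : 0 < R / 2 * ‖deriv g a‖ := by positivity
    exact half_pos (pos_of_mul_pos_left (this.trans_le hpa) (norm_nonneg _))
  have hball : ball p ((R / 2 - dist p a) / 2) ⊆ closedBall a (R / 2) := fun z hz ↦ by
    rw [mem_ball] at hz
    rw [mem_closedBall]
    linarith [dist_triangle z p a]
  refine ⟨p, _, hs, hball.trans hsub, fun z hz ↦ ?_, by linarith⟩
  have hz' : (R / 2 - dist p a) / 2 ≤ R / 2 - dist z a := by
    rw [mem_ball] at hz
    linarith [dist_triangle z p a]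
  nlinarith [hmax z (hball hz), mul_le_mul_of_nonneg_right hz' (norm_nonneg (deriv g z))]

theorem exists_ball_subset_image_ball (hg : DifferentiableOn ℂ g (ball a R)) :
    ∃ w, ball w (R * ‖deriv g a‖ / 96) ⊆ g '' ball a R := by
  rcases le_or_gt (R * ‖deriv g a‖) 0 with h | hpos
  · exact ⟨0, by rw [ball_eq_empty.2 (by linarith)]; exact empty_subset _⟩
  have hR : 0 < R := pos_of_mul_pos_left hpos (norm_nonneg _)
  have ha : deriv g a ≠ 0 := norm_pos_iff.1 (pos_of_mul_pos_right hpos hR.le)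
  obtain ⟨p, s, -, hsub, hle, hs⟩ := exists_ball_norm_deriv_le_two_mul hg hR ha
  refine ⟨g p, ?_⟩
  calc ball (g p) (R * ‖deriv g a‖ / 96) ⊆ ball (g p) (s * ‖deriv g p‖ / 24) :=
        ball_subset_ball (by linarith)
    _ ⊆ g '' ball p s := ball_subset_image_of_norm_deriv_le (hg.mono hsub) hle
    _ ⊆ g '' ball a R := image_mono hsub

theorem dist_le_of_forall_not_ball_subset_image (hg : DifferentiableOn ℂ g (ball a R))
    (hρ : ∀ w, ¬ ball w ρ ⊆ g '' ball a R) {z : ℂ} (hz : z ∈ ball a (R / 2)) :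
    dist (g z) (g a) ≤ 96 * ρ := by
  have hR : 0 < R / 2 := pos_of_mem_ball hz
  have hderiv : ∀ x ∈ ball a (R / 2), ‖deriv g x‖ ≤ 96 * ρ / (R / 2) := by
    intro x hx
    have hsub : ball x (R / 2) ⊆ ball a R := ball_subset_ball' (by linarith [mem_ball.1 hx])
    obtain ⟨w, hw⟩ := exists_ball_subset_image_ball (hg.mono hsub)
    have hlt : R / 2 * ‖deriv g x‖ / 96 < ρ := by
      by_contra! h
      exact hρ w ((ball_subset_ball h).trans (hw.trans (image_mono hsub)))
    rw [le_div_iff₀ hR]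
    linarith
  have hmvt := (convex_ball a (R / 2)).norm_image_sub_le_of_norm_deriv_le (fun x hx ↦
    hg.differentiableAt (isOpen_ball.mem_nhds (ball_subset_ball (by linarith) hx))) hderiv
    (mem_ball_self hR) hz
  have hρ0 : 0 ≤ 96 * ρ / (R / 2) := (norm_nonneg _).trans (hderiv z hz)
  rw [← dist_eq_norm, ← dist_eq_norm] at hmvt
  calc dist (g z) (g a) ≤ 96 * ρ / (R / 2) * dist z a := hmvt
    _ ≤ 96 * ρ / (R / 2) * (R / 2) := by gcongr; exact (mem_ball.1 hz).le
    _ = 96 * ρ := div_mul_cancel₀ _ hR.ne'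

end Bloch

/-! ### Schottky's theorem -/

section Schottky

variable {a : ℂ} {R : ℝ} {f : ℂ → ℂ}

theorem exists_exp_eq_on_ball {w : ℂ} (hf : DifferentiableOn ℂ f (ball a R))
    (h0 : ∀ z ∈ ball a R, f z ≠ 0) (hw : exp w = f a) :
    ∃ g : ℂ → ℂ, DifferentiableOn ℂ g (ball a R) ∧ g a = w ∧ ∀ z ∈ ball a R, exp (g z) = f z := by
  obtain ⟨g, hga, hg⟩ := ((hf.deriv isOpen_ball).fun_div hf h0).isExactOn_ball.with_val_at a w
  have hderiv : ∀ z ∈ ball a R, HasDerivAt (fun z ↦ f z * exp (-g z)) 0 z := fun z hz ↦ by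
    have hfz := (hf.differentiableAt (isOpen_ball.mem_nhds hz)).hasDerivAt
    refine (hfz.fun_mul (hg z hz).fun_neg.cexp).congr_deriv ?_
    have := h0 z hz
    field_simp
    ring
  refine ⟨g, fun z hz ↦ (hg z hz).differentiableAt.differentiableWithinAt, hga, fun z hz ↦ ?_⟩
  have ha : a ∈ ball a R := mem_ball_self (pos_of_mem_ball hz)
  have hconst : f z * exp (-g z) = f a * exp (-g a) :=
    isOpen_ball.is_const_of_deriv_eq_zero (convex_ball a R).isPreconnected
      (fun z hz ↦ (hderiv z hz).differentiableAt.differentiableWithinAt)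
      (fun z hz ↦ (hderiv z hz).deriv) hz ha
  rw [hga, exp_neg, exp_neg, hw, mul_inv_cancel₀ (h0 a ha)] at hconst
  exact (mul_inv_eq_one₀ (exp_ne_zero _)).1 hconst |>.symm

theorem exists_sq_eq_on_ball (hf : DifferentiableOn ℂ f (ball a R))
    (h0 : ∀ z ∈ ball a R, f z ≠ 0) :
    ∃ g : ℂ → ℂ, DifferentiableOn ℂ g (ball a R) ∧ ∀ z ∈ ball a R, g z ^ 2 = f z := by
  rcases (ball a R).eq_empty_or_nonempty with h | h
  · exact ⟨f, hf, by simp only [h, mem_empty_iff_false, false_imp_iff, implies_true]⟩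
  obtain ⟨g, hg, -, hgf⟩ :=
    exists_exp_eq_on_ball hf h0 (exp_log (h0 a (mem_ball_self (nonempty_ball.1 h))))
  refine ⟨fun z ↦ exp (g z / 2), (hg.div_const 2).cexp, fun z hz ↦ ?_⟩
  rw [← exp_nat_mul, Nat.cast_two, mul_div_cancel₀ _ two_ne_zero, hgf z hz]

theorem exists_cosh_sq_eq_on_ball (hf : DifferentiableOn ℂ f (ball a R))
    (h01 : MapsTo f (ball a R) {0, 1}ᶜ) :
    ∃ g : ℂ → ℂ, DifferentiableOn ℂ g (ball a R) ∧ ∀ z ∈ ball a R, cosh (g z) ^ 2 = f z := by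
  rcases (ball a R).eq_empty_or_nonempty with h | h
  · exact ⟨f, hf, by simp only [h, mem_empty_iff_false, false_imp_iff, implies_true]⟩
  obtain ⟨s, hs, hs2⟩ := exists_sq_eq_on_ball hf fun z hz h ↦ h01 hz (Or.inl h)
  obtain ⟨t, ht, ht2⟩ := exists_sq_eq_on_ball (hf.sub_const 1)
    fun z hz h ↦ h01 hz (Or.inr (sub_eq_zero.1 h))
  have hst : ∀ z ∈ ball a R, (s z + t z) * (s z - t z) = 1 := fun z hz ↦ by
    linear_combination hs2 z hz - ht2 z hz
  have hne : ∀ z ∈ ball a R, s z + t z ≠ 0 := fun z hz ↦ left_ne_zero_of_mul_eq_one (hst z hz)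
  obtain ⟨g, hg, -, hgst⟩ := exists_exp_eq_on_ball (hs.fun_add ht) hne
    (exp_log (hne a (mem_ball_self (nonempty_ball.1 h))))
  refine ⟨g, hg, fun z hz ↦ ?_⟩
  rw [cosh, exp_neg, hgst z hz, inv_eq_of_mul_eq_one_right (hst z hz), ← hs2 z hz]
  ring

theorem cosh_sq_add_one_le {x : ℝ} (hx : 0 ≤ x) :
    Real.cosh x ^ 2 + 1 ≤ Real.cosh (x + 1) ^ 2 := by
  have hsinh1 : 1 ≤ Real.sinh 1 := Real.self_le_sinh_iff.2 zero_le_one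
  have hsinh : 0 ≤ Real.sinh x := Real.sinh_nonneg_iff.2 hx
  calc Real.cosh x ^ 2 + 1 ≤ Real.cosh x ^ 2 * (1 + Real.sinh 1 ^ 2) := by
        nlinarith [one_le_pow₀ (n := 2) (Real.one_le_cosh x), one_le_pow₀ (n := 2) hsinh1]
    _ = (Real.cosh x * Real.cosh 1) ^ 2 := by rw [mul_pow, Real.cosh_sq 1, add_comm 1]
    _ ≤ Real.cosh (x + 1) ^ 2 := by
        rw [Real.cosh_add]
        gcongr
        exact le_add_of_nonneg_right (mul_nonneg hsinh (by linarith))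

theorem exists_mem_ball_cosh_sq_eq_natCast (w : ℂ) :
    ∃ w' ∈ ball w 3, ∃ n : ℕ, cosh w' ^ 2 = n := by
  wlog hw : 0 ≤ w.re generalizing w
  · obtain ⟨w', hw', n, hn⟩ := this (-w) (by rw [neg_re]; linarith)
    refine ⟨-w', ?_, n, by rw [cosh_neg, hn]⟩
    rwa [mem_ball, ← dist_neg_neg, neg_neg]
  obtain ⟨t, ⟨ht1, ht2⟩, ht⟩ := intermediate_value_Icc (f := fun t ↦ Real.cosh t ^ 2)
    (show w.re ≤ w.re + 1 by linarith) (by fun_prop)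
    (show (⌈Real.cosh w.re ^ 2⌉₊ : ℝ) ∈ Icc (Real.cosh w.re ^ 2) (Real.cosh (w.re + 1) ^ 2) from
      ⟨Nat.le_ceil _, (Nat.ceil_lt_add_one (by positivity)).le.trans (cosh_sq_add_one_le hw)⟩)
  set m : ℤ := round (w.im / Real.pi)
  have him : |m * Real.pi - w.im| ≤ Real.pi / 2 := by
    have h := abs_sub_round (w.im / Real.pi)
    rw [abs_sub_comm] at h
    calc |m * Real.pi - w.im| = |m - w.im / Real.pi| * Real.pi := by
          rw [← abs_of_pos Real.pi_pos, ← abs_mul, abs_of_pos Real.pi_pos, sub_mul,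
            div_mul_cancel₀ _ Real.pi_ne_zero]
      _ ≤ 1 / 2 * Real.pi := by gcongr
      _ = Real.pi / 2 := by ring
  have hre : |t - w.re| ≤ 1 := by rw [abs_le]; constructor <;> linarith
  refine ⟨t + (m * Real.pi : ℝ) * I, ?_, ⌈Real.cosh w.re ^ 2⌉₊, ?_⟩
  · rw [mem_ball, dist_eq_norm]
    refine (norm_le_abs_re_add_abs_im _).trans_lt ?_
    simp only [sub_re, add_re, ofReal_re, re_ofReal_mul, I_re, mul_zero, add_zero, sub_im, add_im,
      ofReal_im, im_ofReal_mul, I_im, mul_one, zero_add]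
    linarith [Real.pi_lt_four]
  · have hsin : sin (m * Real.pi) = 0 := sin_int_mul_pi m
    have hcos : cos (m * Real.pi) ^ 2 = 1 := by
      simpa only [hsin, zero_pow two_ne_zero, zero_add] using sin_sq_add_cos_sq (m * Real.pi : ℂ)
    rw [cosh_add, cosh_mul_I, sinh_mul_I, ofReal_mul, ofReal_intCast, hsin, zero_mul, mul_zero,
      add_zero, mul_pow, hcos, mul_one]
    exact_mod_cast congrArg ((↑) : ℝ → ℂ) ht

theorem norm_cosh_le_exp_abs_re (z : ℂ) : ‖cosh z‖ ≤ Real.exp |z.re| := by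
  calc ‖cosh z‖ = ‖exp z + exp (-z)‖ / 2 := by rw [cosh, norm_div, norm_ofNat]
    _ ≤ (Real.exp z.re + Real.exp (-z.re)) / 2 := by
        gcongr
        simpa only [norm_exp, neg_re] using norm_add_le (exp z) (exp (-z))
    _ ≤ (Real.exp |z.re| + Real.exp |z.re|) / 2 := by
        gcongr
        · exact le_abs_self _
        · exact neg_le_abs _
    _ = Real.exp |z.re| := add_self_div_two _

theorem abs_re_le_norm_cosh (z : ℂ) : |z.re| ≤ ‖cosh z‖ := by
  calc |z.re| ≤ Real.sinh |z.re| := Real.self_le_sinh_iff.2 (abs_nonneg _)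
    _ = |Real.exp z.re - Real.exp (-z.re)| / 2 := by
        rw [← Real.abs_sinh, Real.sinh_eq, abs_div, abs_two]
    _ ≤ ‖exp z + exp (-z)‖ / 2 := by
        gcongr
        simpa only [norm_exp, neg_re, norm_neg, sub_neg_eq_add] using
          abs_norm_sub_norm_le (exp z) (-exp (-z))
    _ = ‖cosh z‖ := by rw [cosh, norm_div, norm_ofNat]

theorem norm_le_exp_of_forall_ne_natCast (hf : DifferentiableOn ℂ f (ball a R))
    (hℕ : ∀ z ∈ ball a R, ∀ n : ℕ, f z ≠ n) {z : ℂ} (hz : z ∈ ball a (R / 2)) :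
    ‖f z‖ ≤ Real.exp (‖f a‖ + 289) ^ 2 := by
  have hR : 0 < R / 2 := pos_of_mem_ball hz
  have hzR : z ∈ ball a R := ball_subset_ball (by linarith) hz
  obtain ⟨g, hg, hgf⟩ := exists_cosh_sq_eq_on_ball hf fun z hz h ↦ h.elim
    (fun h ↦ hℕ z hz 0 (by rw [h, Nat.cast_zero])) fun h ↦ hℕ z hz 1 (by rw [h, Nat.cast_one])
  have hdist : dist (g z) (g a) ≤ 96 * 3 := by
    refine dist_le_of_forall_not_ball_subset_image hg (fun w hw ↦ ?_) hz
    obtain ⟨w', hw', n, hn⟩ := exists_mem_ball_cosh_sq_eq_natCast w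
    obtain ⟨y, hy, rfl⟩ := hw hw'
    exact hℕ y hy n (by rw [← hgf y hy, hn])
  have ha : |(g a).re| ≤ ‖f a‖ + 1 := by
    have h := abs_re_le_norm_cosh (g a)
    rw [← hgf a (mem_ball_self (by linarith)), norm_pow]
    nlinarith [sq_nonneg (‖cosh (g a)‖ - 1)]
  have hre : |(g z).re| ≤ ‖f a‖ + 289 := by
    have h := (abs_re_le_norm (g z - g a)).trans ((dist_eq_norm _ _).symm.trans_le hdist)
    rw [sub_re] at h
    linarith [abs_sub_abs_le_abs_sub (g z).re (g a).re]
  rw [← hgf z hzR, norm_pow]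
  gcongr
  exact (norm_cosh_le_exp_abs_re _).trans (Real.exp_le_exp.2 hre)

theorem norm_log_le {z : ℂ} (hz : 1 / 2 ≤ ‖z‖) : ‖log z‖ ≤ ‖z‖ + 6 := by
  have hpos : 0 < ‖z‖ := by linarith
  have h2 : ‖z‖⁻¹ ≤ 2 := by
    rw [inv_le_comm₀ hpos two_pos]
    linarith
  have hlog : |Real.log ‖z‖| ≤ ‖z‖ + 2 := by
    have h := Real.log_le_sub_one_of_pos (inv_pos.2 hpos)
    rw [Real.log_inv] at h
    rw [abs_le]
    constructor <;> linarith [Real.log_le_sub_one_of_pos hpos]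
  have h := norm_le_abs_re_add_abs_im (log z)
  rw [log_re, log_im] at h
  linarith [abs_arg_le_pi z, Real.pi_le_four]

theorem schottky_of_half_le (A : ℝ) : ∃ B : ℝ, ∀ (a : ℂ) (R : ℝ) (f : ℂ → ℂ),
    DifferentiableOn ℂ f (ball a R) → MapsTo f (ball a R) {0, 1}ᶜ → ‖f a‖ ≤ A → 1 / 2 ≤ ‖f a‖ →
    ∀ z ∈ ball a (R / 2), ‖f z‖ ≤ B := by
  have hpi : ‖2 * Real.pi * I‖ = 2 * Real.pi := by
    rw [norm_mul, norm_mul, norm_I, norm_ofNat, norm_real, Real.norm_of_nonneg Real.pi_pos.le,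
      mul_one]
  refine ⟨Real.exp (2 * Real.pi * Real.exp (A + 6 + 289) ^ 2), ?_⟩
  intro a R f hf h01 hA hA' z hz
  have hR : 0 < R / 2 := pos_of_mem_ball hz
  have hfa : f a ≠ 0 := norm_pos_iff.1 (by linarith)
  obtain ⟨l, hl, hla, hlf⟩ :=
    exists_exp_eq_on_ball hf (fun z hz h ↦ h01 hz (Or.inl h)) (exp_log hfa)
  set φ : ℂ → ℂ := fun z ↦ l z / (2 * Real.pi * I)
  have hlφ : ∀ z, l z = 2 * Real.pi * I * φ z := fun z ↦
    (mul_div_cancel₀ _ two_pi_I_ne_zero).symm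
  have hℕ : ∀ z ∈ ball a R, ∀ n : ℕ, φ z ≠ n := by
    intro z hz n hn
    refine h01 hz (Or.inr ?_)
    rw [← hlf z hz, hlφ, hn, mul_comm]
    exact exp_nat_mul_two_pi_mul_I n
  have hφa : ‖φ a‖ ≤ A + 6 := by
    calc ‖φ a‖ = ‖log (f a)‖ / (2 * Real.pi) := by rw [norm_div, hpi, hla]
      _ ≤ ‖log (f a)‖ := div_le_self (norm_nonneg _) (by linarith [Real.pi_gt_three])
      _ ≤ A + 6 := by linarith [norm_log_le hA']
  calc ‖f z‖ = Real.exp (l z).re := by rw [← hlf z (ball_subset_ball (by linarith) hz), norm_exp]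
    _ ≤ Real.exp (2 * Real.pi * ‖φ z‖) := by
        rw [← hpi, ← norm_mul, ← hlφ]
        exact Real.exp_le_exp.2 (re_le_norm _)
    _ ≤ Real.exp (2 * Real.pi * Real.exp (A + 6 + 289) ^ 2) := by
        gcongr
        refine (norm_le_exp_of_forall_ne_natCast (hl.div_const _) hℕ hz).trans ?_
        gcongr

theorem schottky (A : ℝ) : ∃ B : ℝ, ∀ (a : ℂ) (R : ℝ) (f : ℂ → ℂ),
    DifferentiableOn ℂ f (ball a R) → MapsTo f (ball a R) {0, 1}ᶜ → ‖f a‖ ≤ A →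
    ∀ z ∈ ball a (R / 2), ‖f z‖ ≤ B := by
  obtain ⟨B, hB⟩ := schottky_of_half_le (A + 1)
  refine ⟨B + 1, fun a R f hf h01 hA z hz ↦ ?_⟩
  by_cases h : 1 / 2 ≤ ‖f a‖
  · linarith [hB a R f hf h01 (by linarith) h z hz]
  -- `1 - f` omits `0` and `1` as well, and one of `f a`, `1 - f a` has norm at least `1 / 2`
  have h01' : MapsTo (fun z ↦ 1 - f z) (ball a R) {0, 1}ᶜ := fun z hz h ↦ h01 hz (h.elim
    (fun h ↦ Or.inr (sub_eq_zero.1 h).symm) fun h ↦ Or.inl (sub_eq_self.1 h))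
  have hlow := norm_sub_norm_le 1 (f a)
  have hup := norm_sub_le 1 (f a)
  rw [norm_one] at hlow hup
  have key := hB a R (fun z ↦ 1 - f z) (hf.const_sub 1) h01' (by linarith) (by linarith) z hz
  have hfz := norm_sub_le 1 (1 - f z)
  rw [sub_sub_cancel, norm_one] at hfz
  linarith

theorem schottky_of_isPreconnected {K : Set ℂ} (hK : IsCompact K) (hKc : IsPreconnected K) {δ : ℝ}
    (hδ : 0 < δ) (A : ℝ) : ∃ B : ℝ, ∀ f : ℂ → ℂ, DifferentiableOn ℂ f (thickening δ K) →
      MapsTo f (thickening δ K) {0, 1}ᶜ → ∀ x ∈ K, ‖f x‖ ≤ A → ∀ y ∈ K, ‖f y‖ ≤ B := by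
  let H : (ℂ → ℂ) → Prop := fun f ↦
    DifferentiableOn ℂ f (thickening δ K) ∧ MapsTo f (thickening δ K) {0, 1}ᶜ
  have hball : ∀ B : ℝ, ∃ C : ℝ, ∀ f, H f → ∀ x ∈ K, ‖f x‖ ≤ B → ∀ y ∈ ball x (δ / 2),
      ‖f y‖ ≤ C := fun B ↦ by
    obtain ⟨C, hC⟩ := schottky B
    exact ⟨C, fun f hf x hx ↦ hC x δ f (hf.1.mono (ball_subset_thickening hx δ))
      (hf.2.mono_left (ball_subset_thickening hx δ))⟩
  have hpoints : ∀ x ∈ K, ∀ y ∈ K, ∀ B : ℝ, ∃ C : ℝ, ∀ f, H f → ‖f x‖ ≤ B → ‖f y‖ ≤ C := by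
    intro x hx y hy
    refine hKc.induction₂' (fun x y ↦ ∀ B : ℝ, ∃ C : ℝ, ∀ f, H f → ‖f x‖ ≤ B → ‖f y‖ ≤ C)
      (fun x hx ↦ ?_) (fun x y z _ _ _ hxy hyz B ↦ ?_) hx hy
    · filter_upwards [inter_mem_nhdsWithin K (ball_mem_nhds x (half_pos hδ))] with z hz
      refine ⟨fun B ↦ ?_, fun B ↦ ?_⟩ <;> obtain ⟨C, hC⟩ := hball B
      · exact ⟨C, fun f hf hB ↦ hC f hf x hx hB z hz.2⟩
      · exact ⟨C, fun f hf hB ↦ hC f hf z hz.1 hB x (mem_ball_comm.1 hz.2)⟩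
    · obtain ⟨C, hC⟩ := hxy B
      obtain ⟨D, hD⟩ := hyz C
      exact ⟨D, fun f hf hB ↦ hD f hf (hC f hf hB)⟩
  obtain ⟨T, hTK, hT⟩ := hK.elim_nhds_subcover (fun x ↦ ball x (δ / 2))
    fun x _ ↦ ball_mem_nhds x (half_pos hδ)
  choose! C hC using hpoints
  obtain ⟨B₁, hB₁⟩ := hball A
  obtain ⟨B₂, hB₂⟩ := ((T ×ˢ T).image fun p ↦ C p.1 p.2 B₁).exists_le
  obtain ⟨B₃, hB₃⟩ := hball B₂
  refine ⟨B₃, fun f hf hf' x hx hA y hy ↦ ?_⟩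
  obtain ⟨s, hs, hxs⟩ := mem_iUnion₂.1 (hT hx)
  obtain ⟨t, ht, hyt⟩ := mem_iUnion₂.1 (hT hy)
  have hfs : ‖f s‖ ≤ B₁ := hB₁ f ⟨hf, hf'⟩ x hx hA s (mem_ball_comm.1 hxs)
  have hft : ‖f t‖ ≤ B₂ := (hC s (hTK s hs) t (hTK t ht) B₁ f ⟨hf, hf'⟩ hfs).trans
    (hB₂ _ (Finset.mem_image_of_mem _ (Finset.mk_mem_product hs ht)))
  exact hB₃ f ⟨hf, hf'⟩ t (hTK t ht) hft y hyt

end Schottky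

theorem exists_disjoint_thickening_finset {ι : Type*} [Fintype ι] {K : ι → Set ℂ}
    (hK : ∀ i, IsCompact (K i)) (hd : Pairwise (Disjoint on K)) :
    ∃ δ > 0, ∀ P : Finset ℂ, P.card < Fintype.card ι → ∃ i, Disjoint (thickening δ (K i)) P := by
  have h : ∀ᶠ δ in 𝓝[>] (0 : ℝ), ∀ i j, i ≠ j →
      Disjoint (thickening δ (K i)) (thickening δ (K j)) := by
    refine eventually_all.2 fun i ↦ eventually_all.2 fun j ↦ eventually_imp_distrib_left.2 ?_
    intro hij
    obtain ⟨δ, hδ, hdis⟩ := (hd hij).exists_thickenings (hK i) (hK j).isClosed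
    filter_upwards [Ioo_mem_nhdsGT hδ] with ε hε
    exact hdis.mono (thickening_mono hε.2.le _) (thickening_mono hε.2.le _)
  obtain ⟨δ, hδ, hδ0⟩ := (h.and self_mem_nhdsWithin).exists
  refine ⟨δ, hδ0, fun P hP ↦ ?_⟩
  contrapose! hP
  choose p hpK hpP using fun i ↦ not_disjoint_iff.1 (hP i)
  have hinj : Function.Injective p := fun i j hij ↦ by
    by_contra hne
    exact disjoint_left.1 (hδ i j hne) (hpK i) (hij ▸ hpK j)
  exact Finset.card_le_card_of_injOn p (fun i _ ↦ hpP i) hinj.injOn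

theorem schottky_of_pairwise_disjoint {Ω : Set ℂ} (hΩ : IsOpen Ω) {ι : Type*} [Fintype ι]
    {K : ι → Set ℂ} (hK : ∀ i, IsCompact (K i)) (hKc : ∀ i, IsPreconnected (K i))
    (hKΩ : ∀ i, K i ⊆ Ω) (hd : Pairwise (Disjoint on K)) (A : ℝ) :
    ∃ B : ℝ, ∀ f : ℂ → ℂ, DifferentiableOn ℂ f Ω → ∀ P : Finset ℂ, P.card < Fintype.card ι →
      MapsTo f (Ω \ P) {0, 1}ᶜ → ∃ i, ∀ x ∈ K i, ‖f x‖ ≤ A → ∀ y ∈ K i, ‖f y‖ ≤ B := by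
  obtain ⟨δ₁, hδ₁, hP⟩ := exists_disjoint_thickening_finset hK hd
  choose ε hε hεΩ using fun i ↦ (hK i).exists_thickening_subset_open hΩ (hKΩ i)
  choose B hB using fun i ↦ schottky_of_isPreconnected (hK i) (hKc i) (lt_min hδ₁ (hε i)) A
  obtain ⟨M, hM⟩ := Finite.exists_le B
  refine ⟨M, fun f hf P hcard hfP ↦ ?_⟩
  obtain ⟨i, hi⟩ := hP P hcard
  have hsub : thickening (min δ₁ (ε i)) (K i) ⊆ Ω \ P := fun z hz ↦
    ⟨hεΩ i (thickening_mono (min_le_right _ _) _ hz),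
      disjoint_left.1 hi (thickening_mono (min_le_left _ _) _ hz)⟩
  exact ⟨i, fun x hx hA y hy ↦ (hB i f (hf.mono (hsub.trans sdiff_subset)) (hfP.mono_left hsub)
    x hx hA y hy).trans (hM i)⟩

theorem disjoint_image_ofReal_mul {u v : ℂ} (hu : ‖u‖ = 1) (hv : ‖v‖ = 1) (huv : u ≠ v)
    {s : Set ℝ} (hs : ∀ t ∈ s, 0 < t) :
    Disjoint ((fun t : ℝ ↦ (t : ℂ) * u) '' s) ((fun t : ℝ ↦ (t : ℂ) * v) '' s) := by
  rw [disjoint_left]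
  rintro _ ⟨t, ht, rfl⟩ ⟨t', ht', h⟩
  have h' := congrArg norm h
  simp only [norm_mul, hu, hv, mul_one, norm_real, Real.norm_of_nonneg (hs t ht).le,
    Real.norm_of_nonneg (hs t' ht').le] at h'
  subst h'
  exact huv (mul_left_cancel₀ (ofReal_ne_zero.2 (hs _ ht).ne') h).symm

theorem infinite_sphere_complex {r : ℝ} (hr : 0 < r) : (sphere (0 : ℂ) r).Infinite := by
  refine (isPreconnected_sphere ?_ 0 r).infinite_of_nontrivial ?_
  · rw [rank_real_complex]; norm_num
  · exact ⟨r, by simp [hr.le], -r, by simp [hr.le], by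
      rw [Ne, self_eq_neg, ofReal_eq_zero]; exact hr.ne'⟩

theorem exists_injective_forall_mem {α : Type*} {s : Set α} (hs : s.Infinite) (n : ℕ) :
    ∃ a : Fin n → α, Injective a ∧ ∀ i, a i ∈ s :=
  ⟨fun i ↦ hs.natEmbedding s i, Subtype.val_injective.comp
    ((hs.natEmbedding s).injective.comp Fin.val_injective), fun i ↦ (hs.natEmbedding s i).2⟩

theorem exists_bound_on_ray_of_omits_off_finset (n : ℕ) {r R : ℝ} (hr : 0 < r) (hR : R < 1)
    (A : ℝ) : ∃ B : ℝ, ∀ f : ℂ → ℂ, DifferentiableOn ℂ f (ball 0 1) → ∀ P : Finset ℂ, P.card ≤ n →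
      MapsTo f (ball 0 1 \ P) {0, 1}ᶜ → (∀ z ∈ sphere (0 : ℂ) r, ‖f z‖ ≤ A) →
      ∃ v : ℂ, ‖v‖ = 1 ∧ ∀ t ∈ Icc r R, ‖f (t * v)‖ ≤ B := by
  obtain ⟨v, hvinj, hv⟩ := exists_injective_forall_mem (infinite_sphere_complex one_pos) (n + 1)
  have hv1 : ∀ i, ‖v i‖ = 1 := fun i ↦ mem_sphere_zero_iff_norm.1 (hv i)
  have hnorm : ∀ i, ∀ t ∈ Icc r R, ‖(t : ℂ) * v i‖ = t := fun i t ht ↦ by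
    rw [norm_mul, hv1, mul_one, norm_real, Real.norm_of_nonneg (hr.le.trans ht.1)]
  obtain ⟨B, hB⟩ := schottky_of_pairwise_disjoint isOpen_ball
    (K := fun i ↦ (fun t : ℝ ↦ (t : ℂ) * v i) '' Icc r R)
    (fun i ↦ isCompact_Icc.image (by fun_prop)) (fun i ↦ isPreconnected_Icc.image _ (by fun_prop))
    (fun i ↦ image_subset_iff.2 fun t ht ↦ mem_ball_zero_iff.2 (by
      rw [hnorm i t ht]
      exact ht.2.trans_lt hR))
    (fun i j hij ↦ disjoint_image_ofReal_mul (hv1 i) (hv1 j) (hvinj.ne hij)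
      fun t ht ↦ hr.trans_le ht.1) A
  refine ⟨B, fun f hf P hP hfP hA ↦ ?_⟩
  obtain ⟨i, hi⟩ := hB f hf P (by rw [Fintype.card_fin]; omega) hfP
  refine ⟨v i, hv1 i, fun t ht ↦ ?_⟩
  have hrR : r ∈ Icc r R := ⟨le_rfl, ht.1.trans ht.2⟩
  exact hi _ (mem_image_of_mem _ hrR) (hA _ (mem_sphere_zero_iff_norm.2 (hnorm i r hrR)))
    _ (mem_image_of_mem _ ht)

theorem exists_bound_on_ball_of_omits_off_finset (n : ℕ) {r R : ℝ} (hr : 0 ≤ r) (hrR : r < R)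
    (hR : R < 1) (A : ℝ) : ∃ B : ℝ, ∀ f : ℂ → ℂ, DifferentiableOn ℂ f (ball 0 1) →
      ∀ P : Finset ℂ, P.card ≤ n → MapsTo f (ball 0 1 \ P) {0, 1}ᶜ →
      (∀ ρ ∈ Ioo r R, ∃ z ∈ sphere (0 : ℂ) ρ, ‖f z‖ ≤ A) → ∀ z ∈ ball (0 : ℂ) r, ‖f z‖ ≤ B := by
  obtain ⟨ρ, hρinj, hρ⟩ := exists_injective_forall_mem (Ioo_infinite hrR) (n + 1)
  have hsub : ∀ i, closedBall (0 : ℂ) (ρ i) ⊆ ball 0 1 := fun i ↦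
    closedBall_subset_ball ((hρ i).2.trans hR)
  obtain ⟨B, hB⟩ := schottky_of_pairwise_disjoint isOpen_ball (fun i ↦ isCompact_sphere 0 (ρ i))
    (fun i ↦ isPreconnected_sphere (by rw [rank_real_complex]; norm_num) 0 _)
    (fun i ↦ sphere_subset_closedBall.trans (hsub i))
    (fun i j hij ↦ disjoint_left.2 fun z hi hj ↦ hρinj.ne hij
      ((mem_sphere.1 hi).symm.trans (mem_sphere.1 hj))) A
  refine ⟨B, fun f hf P hP hfP hA z hz ↦ ?_⟩
  obtain ⟨i, hi⟩ := hB f hf P (by rw [Fintype.card_fin]; omega) hfP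
  obtain ⟨w, hw, hwA⟩ := hA (ρ i) (hρ i)
  refine norm_le_of_forall_mem_frontier_norm_le isBounded_ball
    ((hf.mono (hsub i)).diffContOnCl_ball Subset.rfl) (fun y hy ↦ hi w hw hwA y ?_)
    (subset_closure (ball_subset_ball (hρ i).1.le hz))
  rwa [frontier_ball _ (hr.trans_lt (hρ i).1).ne'] at hy

theorem exists_bound_of_omits_off_finset (n : ℕ) {r R : ℝ} (hr : 0 < r) (hrR : r ≤ R) (hR : R < 1)
    (A : ℝ) : ∃ B : ℝ, ∀ f : ℂ → ℂ, DifferentiableOn ℂ f (ball 0 1) → ∀ P : Finset ℂ, P.card ≤ n →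
      MapsTo f (ball 0 1 \ P) {0, 1}ᶜ → (∀ z ∈ ball (0 : ℂ) r, ‖f z‖ ≤ A) →
      ∀ z ∈ ball (0 : ℂ) R, ‖f z‖ ≤ B := by
  obtain ⟨R', hRR', hR'⟩ := exists_between hR
  obtain ⟨B₁, hB₁⟩ := exists_bound_on_ray_of_omits_off_finset n (half_pos hr) hR' A
  obtain ⟨B₂, hB₂⟩ :=
    exists_bound_on_ball_of_omits_off_finset n (hr.le.trans hrR) hRR' hR' B₁
  refine ⟨B₂, fun f hf P hP hfP hA ↦ hB₂ f hf P hP hfP fun ρ hρ ↦ ?_⟩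
  obtain ⟨v, hv, hB⟩ := hB₁ f hf P hP hfP fun z hz ↦
    hA z (sphere_subset_ball (half_lt_self hr) hz)
  have hρ0 : r / 2 ≤ ρ := by linarith [hρ.1]
  refine ⟨ρ * v, mem_sphere_zero_iff_norm.2 ?_, hB ρ ⟨hρ0, hρ.2.le⟩⟩
  rw [norm_mul, hv, mul_one, norm_real, Real.norm_of_nonneg (by linarith)]

/-! ### Continuous logarithms and winding -/

section Winding

/-- The function `z ↦ z - w` has a continuous logarithm on `Γ`: the set `Γ` does not wind around
the point `w`. -/
def HasLogOn (Γ : Set ℂ) (w : ℂ) : Prop :=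
  ∃ L : ℂ → ℂ, ContinuousOn L Γ ∧ ∀ z ∈ Γ, exp (L z) = z - w

/-- The set of points around which `Γ` winds. -/
def windingSet (Γ : Set ℂ) : Set ℂ :=
  {w | w ∉ Γ ∧ ¬HasLogOn Γ w}

variable {Γ Ω : Set ℂ} {w w' : ℂ}

theorem HasLogOn.of_forall_lt (h : HasLogOn Γ w) (hw : ∀ z ∈ Γ, ‖w - w'‖ < ‖z - w‖) :
    HasLogOn Γ w' := by
  obtain ⟨L, hL, hLw⟩ := h
  have h0 : ∀ z ∈ Γ, z - w ≠ 0 := fun z hz ↦ norm_pos_iff.1 ((norm_nonneg _).trans_lt (hw z hz))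
  have hslit : ∀ z ∈ Γ, 1 + (w - w') / (z - w) ∈ slitPlane := fun z hz ↦
    mem_slitPlane_of_norm_lt_one (by
      rw [norm_div, div_lt_one (norm_pos_iff.2 (h0 z hz))]; exact hw z hz)
  refine ⟨fun z ↦ L z + log (1 + (w - w') / (z - w)), hL.add (ContinuousOn.clog ?_ hslit),
    fun z hz ↦ ?_⟩
  · exact continuousOn_const.add (continuousOn_const.div (by fun_prop) h0)
  · rw [exp_add, hLw z hz, exp_log (slitPlane_ne_zero (hslit z hz)), mul_add, mul_one,
      mul_div_cancel₀ _ (h0 z hz), sub_add_sub_cancel]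

theorem hasLogOn_of_notMem_closure_convexHull (hw : w ∉ closure (convexHull ℝ Γ)) :
    HasLogOn Γ w := by
  obtain ⟨φ, u, hwu, hu⟩ := RCLike.geometric_hahn_banach_point_closed (𝕜 := ℂ)
    (convex_convexHull ℝ Γ).closure isClosed_closure hw
  have hφ : ∀ z, φ z = z * φ 1 := fun z ↦ by
    simpa only [smul_eq_mul, mul_one] using φ.map_smul z 1
  have hpos : ∀ z ∈ Γ, 0 < ((z - w) * φ 1).re := fun z hz ↦ by
    rw [← hφ, map_sub, sub_re]
    exact sub_pos.2 (hwu.trans (hu z (subset_closure (subset_convexHull ℝ Γ hz))))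
  rcases eq_or_ne (φ 1) 0 with h1 | h1
  · refine ⟨0, continuousOn_const, fun z hz ↦ absurd (hpos z hz) ?_⟩
    rw [h1, mul_zero, zero_re]
    exact lt_irrefl 0
  refine ⟨fun z ↦ log ((z - w) * φ 1) - log (φ 1), (ContinuousOn.clog (by fun_prop) fun z hz ↦
    Or.inl (hpos z hz)).sub continuousOn_const, fun z hz ↦ ?_⟩
  have hne : (z - w) * φ 1 ≠ 0 := slitPlane_ne_zero (Or.inl (hpos z hz))
  rw [exp_sub, exp_log hne, exp_log h1, mul_div_cancel_right₀ _ h1]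

theorem eventually_nhds_hasLogOn_iff (hΓ : IsClosed Γ) (hw : w ∉ Γ) :
    ∀ᶠ w' in 𝓝 w, w' ∉ Γ ∧ (HasLogOn Γ w' ↔ HasLogOn Γ w) := by
  obtain ⟨d, hd, hball⟩ := Metric.isOpen_iff.1 hΓ.isOpen_compl w hw
  have hdist : ∀ z ∈ Γ, d ≤ ‖z - w‖ := fun z hz ↦ by
    by_contra! hlt
    exact hball (by rwa [mem_ball, dist_eq_norm]) hz
  filter_upwards [ball_mem_nhds w (half_pos hd)] with w' hw'
  have hlt : ‖w - w'‖ < d / 2 := by rwa [mem_ball, dist_comm, dist_eq_norm] at hw'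
  refine ⟨hball (ball_subset_ball (half_le_self hd.le) hw'),
    fun h ↦ h.of_forall_lt fun z hz ↦ ?_, fun h ↦ h.of_forall_lt fun z hz ↦ ?_⟩
  · rw [norm_sub_rev]
    linarith [norm_sub_le_norm_sub_add_norm_sub z w' w, hdist z hz, norm_sub_rev w w']
  · linarith [hdist z hz]

theorem isOpen_windingSet (hΓ : IsClosed Γ) : IsOpen (windingSet Γ) :=
  isOpen_iff_mem_nhds.2 fun w hw ↦ by
    filter_upwards [eventually_nhds_hasLogOn_iff hΓ hw.1] with w' hw'
    exact ⟨hw'.1, fun h ↦ hw.2 (hw'.2.1 h)⟩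

theorem mem_windingSet_of_mem_closure (hΓ : IsClosed Γ) (hw : w ∈ closure (windingSet Γ))
    (hwΓ : w ∉ Γ) : w ∈ windingSet Γ := by
  obtain ⟨w', hw', hmem⟩ :=
    mem_closure_iff_nhds.1 hw _ (eventually_nhds_hasLogOn_iff hΓ hwΓ)
  exact ⟨hwΓ, fun h ↦ hmem.2 (hw'.2.2 h)⟩

theorem closure_windingSet_subset_closure_convexHull (Γ : Set ℂ) :
    closure (windingSet Γ) ⊆ closure (convexHull ℝ Γ) :=
  closure_minimal (fun _ hw ↦ by_contra fun h ↦ hw.2 (hasLogOn_of_notMem_closure_convexHull h))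
    isClosed_closure

theorem closure_convexHull_subset_of_isOpen {E : Type*} [SeminormedAddCommGroup E]
    [NormedSpace ℝ E] {s t : Set E} (hs : IsCompact s) (ht : IsOpen t) (htc : Convex ℝ t)
    (hst : s ⊆ t) : closure (convexHull ℝ s) ⊆ t := by
  obtain ⟨δ, hδ, hsub⟩ := hs.exists_thickening_subset_open ht hst
  calc closure (convexHull ℝ s) ⊆ thickening δ (convexHull ℝ s) := closure_subset_thickening hδ _
    _ = convexHull ℝ (thickening δ s) := by
      rw [← add_ball_zero, ← add_ball_zero, convexHull_add, (convex_ball 0 δ).convexHull_eq]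
    _ ⊆ t := convexHull_min hsub htc

theorem tendsto_add_ofReal_mul_mul_I (z : ℂ) (σ : ℝ) :
    Tendsto (fun ε : ℝ ↦ z + (σ * ε : ℝ) * I) (𝓝[>] 0) (𝓝 z) := by
  have hcont : Continuous fun ε : ℝ ↦ z + (σ * ε : ℝ) * I := by fun_prop
  simpa only [mul_zero, ofReal_zero, zero_mul, add_zero] using
    (hcont.tendsto 0).mono_left nhdsWithin_le_nhds

theorem exists_re_eq_abs_im_sub_lt {S : Set ℂ} {z : ℂ} (hS : S ∈ 𝓝 z) (c : ℝ) :
    ∃ z' ∈ S, z'.re = z.re ∧ |z.im - c| < |z'.im - c| := by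
  obtain ⟨ε, ⟨hpos, hneg⟩, hε : 0 < ε⟩ :=
    (((tendsto_add_ofReal_mul_mul_I z 1).eventually hS).and
      ((tendsto_add_ofReal_mul_mul_I z (-1)).eventually hS) |>.and self_mem_nhdsWithin).exists
  rcases le_total c z.im with h | h
  · refine ⟨_, hpos, by simp, ?_⟩
    rw [abs_of_nonneg (sub_nonneg.2 h)]
    exact lt_of_lt_of_le (by simp [hε]) (le_abs_self _)
  · refine ⟨_, hneg, by simp, ?_⟩
    rw [abs_of_nonpos (sub_nonpos.2 h)]
    exact lt_of_lt_of_le (by simp [hε]) (neg_le_abs _)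

/-- If `Γ` meets the zero set of `re f` only on a level set of `im f`, then it winds around no zero
of `re f`: on the part of the zero set around which `Γ` winds, `|im f - c|` would attain a maximum,
against the openness of `f`. -/
theorem hasLogOn_of_re_eq_zero {f : ℂ → ℂ} (hΩ : IsOpen Ω) (hΩc : Convex ℝ Ω)
    (hf : ContinuousOn f Ω) (hopen : ∀ U ⊆ Ω, IsOpen U → IsOpen (f '' U))
    (hΓ : IsCompact Γ) (hΓΩ : Γ ⊆ Ω) {c : ℝ}
    (hc : ∀ z ∈ Γ, (f z).re = 0 → (f z).im = c) (hwΓ : w ∉ Γ) (hw : (f w).re = 0) :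
    HasLogOn Γ w := by
  by_contra hnot
  have hΩ' : closure (windingSet Γ) ⊆ Ω := (closure_windingSet_subset_closure_convexHull Γ).trans
    (closure_convexHull_subset_of_isOpen hΓ hΩ hΩc hΓΩ)
  have hup : ∀ y ∈ windingSet Γ, (f y).re = 0 →
      ∃ y' ∈ windingSet Γ, (f y').re = 0 ∧ |(f y).im - c| < |(f y').im - c| := by
    intro y hy hy0
    obtain ⟨_, ⟨y', hy', rfl⟩, hre, him⟩ := exists_re_eq_abs_im_sub_lt
      ((hopen _ (subset_closure.trans hΩ') (isOpen_windingSet hΓ.isClosed)).mem_nhds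
        (mem_image_of_mem f hy)) c
    exact ⟨y', hy', hre.trans hy0, him⟩
  have hcompact : IsCompact (closure (windingSet Γ) ∩ f ⁻¹' {z | z.re = 0}) :=
    (isBounded_convexHull.2 hΓ.isBounded).isCompact_closure.of_isClosed_subset
      ((hf.mono hΩ').preimage_isClosed_of_isClosed isClosed_closure
        (isClosed_eq continuous_re continuous_const))
      (inter_subset_left.trans (closure_windingSet_subset_closure_convexHull Γ))
  have hmem : w ∈ windingSet Γ := ⟨hwΓ, hnot⟩
  obtain ⟨y, ⟨hy, hy0⟩, hmax⟩ := hcompact.exists_isMaxOn ⟨w, subset_closure hmem, hw⟩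
    (f := fun z ↦ |(f z).im - c|) (((continuous_im.comp_continuousOn
      (hf.mono (inter_subset_left.trans hΩ'))).sub continuousOn_const).abs)
  have hmax : ∀ z ∈ windingSet Γ, (f z).re = 0 → |(f z).im - c| ≤ |(f y).im - c| :=
    fun z hz hz0 ↦ hmax ⟨subset_closure hz, hz0⟩
  obtain ⟨w', hw', hw'0, hlt⟩ := hup w hmem hw
  have hyΓ : y ∉ Γ := fun hyΓ ↦ by
    have h := hmax w' hw' hw'0
    rw [hc y hyΓ hy0, sub_self, abs_zero] at h
    exact (abs_nonneg _).not_gt (hlt.trans_le h)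
  obtain ⟨y', hy', hy'0, hlt'⟩ := hup y (mem_windingSet_of_mem_closure hΓ.isClosed hy hyΓ) hy0
  exact (hmax y' hy' hy'0).not_gt hlt'

theorem sub_eq_log_sub_log {X : Type*} [TopologicalSpace X] {S : Set X} (hS : IsPreconnected S)
    {L : X → ℂ} (hL : ContinuousOn L S) (hslit : ∀ x ∈ S, exp (L x) ∈ slitPlane) {x y : X}
    (hx : x ∈ S) (hy : y ∈ S) : L x - L y = log (exp (L x)) - log (exp (L y)) := by
  have hexp : EqOn (fun x ↦ (⟨exp (L x), exp_ne_zero _⟩ : {z : ℂ // z ≠ 0}))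
      (fun x ↦ ⟨exp (log (exp (L x)) + (L y - log (exp (L y)))), exp_ne_zero _⟩) S :=
    fun x _ ↦ Subtype.ext <|
      show exp (L x) = exp (log (exp (L x)) + (L y - log (exp (L y)))) by
        rw [exp_add, exp_sub, exp_log (exp_ne_zero _), exp_log (exp_ne_zero _),
          div_self (exp_ne_zero _), mul_one]
  have hlog : ContinuousOn (fun x ↦ log (exp (L x)) + (L y - log (exp (L y)))) S :=
    (hL.cexp.clog hslit).add continuousOn_const
  have h := isCoveringMap_exp.eqOn_of_comp_eqOn hS hL hlog hexp hy (by ring) hx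
  linear_combination h

theorem abs_arg_le_of_norm_sub_le {z : ℂ} {η : ℝ} (hη : 0 < η) (hz : ‖z - η‖ ≤ η / 4) :
    |arg z| ≤ 3 / 8 := by
  have hη0 : (η : ℂ) ≠ 0 := ofReal_ne_zero.2 hη.ne'
  have hnorm : ‖(z - η) / η‖ ≤ 1 / 4 := by
    rw [norm_div, norm_real, Real.norm_of_nonneg hη.le, div_le_iff₀ hη]
    linarith
  have hlog : |(log (1 + (z - η) / η)).im| ≤ 3 / 8 := by
    linarith [abs_im_le_norm (log (1 + (z - η) / η)),
      norm_log_one_add_half_le_self (z := (z - η) / η) (by linarith)]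
  rwa [log_im, one_add_div hη0, add_sub_cancel, div_eq_inv_mul, ← ofReal_inv,
    arg_real_mul _ (inv_pos.2 hη)] at hlog

end Winding

section Crossing

theorem pi_sub_le_arg_sub_arg {α : ℂ} {η : ℝ} (hη : 0 < η) (hα : ‖α‖ ≤ η / 4) (him : 0 < α.im) :
    Real.pi - 3 / 4 ≤ arg (η - α) - arg (-η - α) := by
  have h₁ := abs_arg_le_of_norm_sub_le (z := η - α) hη (by rwa [sub_sub_cancel_left, norm_neg])
  have h₂ := abs_arg_le_of_norm_sub_le (z := η + α) hη (by rwa [add_sub_cancel_left])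
  rw [← neg_add', arg_neg_eq_arg_sub_pi_of_im_pos (by simpa using him)]
  linarith [(abs_le.1 h₁).1, (abs_le.1 h₂).2]

theorem arg_sub_arg_le_sub_pi {α : ℂ} {η : ℝ} (hη : 0 < η) (hα : ‖α‖ ≤ η / 4) (him : α.im < 0) :
    arg (η - α) - arg (-η - α) ≤ 3 / 4 - Real.pi := by
  have h₁ := abs_arg_le_of_norm_sub_le (z := η - α) hη (by rwa [sub_sub_cancel_left, norm_neg])
  have h₂ := abs_arg_le_of_norm_sub_le (z := η + α) hη (by rwa [add_sub_cancel_left])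
  rw [← neg_add', arg_neg_eq_arg_add_pi_of_im_neg (by simpa using him)]
  linarith [(abs_le.1 h₁).2, (abs_le.1 h₂).1]

theorem im_sub_eq_arg_sub_arg {L : ℂ → ℂ} {α : ℂ} (hα : α.im ≠ 0) {η : ℝ} (hη : 0 ≤ η)
    (hL : ContinuousOn L (ofReal '' Icc (-η) η))
    (hexp : ∀ z ∈ ofReal '' Icc (-η) η, exp (L z) = z - α) :
    (L η).im - (L (-η)).im = arg (η - α) - arg (-η - α) := by
  have hη' : (η : ℂ) ∈ ofReal '' Icc (-η) η := mem_image_of_mem _ (right_mem_Icc.2 (by linarith))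
  have hη'' : (-η : ℂ) ∈ ofReal '' Icc (-η) η :=
    ⟨-η, left_mem_Icc.2 (by linarith), ofReal_neg η⟩
  have h := sub_eq_log_sub_log (isPreconnected_Icc.image _ continuous_ofReal.continuousOn) hL
    (by
      rintro _ ⟨t, ht, rfl⟩
      rw [hexp _ (mem_image_of_mem _ ht)]
      exact Or.inr (by rwa [sub_im, ofReal_im, zero_sub, neg_ne_zero])) hη' hη''
  rw [hexp _ hη', hexp _ hη''] at h
  simpa only [sub_im, log_im] using congrArg im h

theorem abs_im_sub_sub_im_sub_le {Q : Set ℂ} (hQ : IsPreconnected Q) {d : ℝ} (hd : 0 < d)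
    (hdQ : ∀ z ∈ Q, d ≤ ‖z‖) {α₁ α₂ : ℂ} (h₁ : ‖α₁‖ ≤ d / 10) (h₂ : ‖α₂‖ ≤ d / 10)
    {L₁ L₂ : ℂ → ℂ} (hL₁ : ContinuousOn L₁ Q) (hL₂ : ContinuousOn L₂ Q)
    (hexp₁ : ∀ z ∈ Q, exp (L₁ z) = z - α₁) (hexp₂ : ∀ z ∈ Q, exp (L₂ z) = z - α₂) {x y : ℂ}
    (hx : x ∈ Q) (hy : y ∈ Q) :
    |((L₁ x).im - (L₁ y).im) - ((L₂ x).im - (L₂ y).im)| ≤ 3 / 4 := by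
  have hclose : ∀ z ∈ Q, ‖exp (L₁ z - L₂ z) - (1 : ℝ)‖ ≤ 1 / 4 := fun z hz ↦ by
    have hne : z - α₂ ≠ 0 := hexp₂ z hz ▸ exp_ne_zero _
    rw [exp_sub, hexp₁ z hz, hexp₂ z hz, ofReal_one, div_sub_one hne, sub_sub_sub_cancel_left,
      norm_div, div_le_iff₀ (norm_pos_iff.2 hne)]
    linarith [norm_sub_le α₂ α₁, norm_sub_norm_le z α₂, hdQ z hz]
  have harg : ∀ z ∈ Q, |arg (exp (L₁ z - L₂ z))| ≤ 3 / 8 := fun z hz ↦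
    abs_arg_le_of_norm_sub_le one_pos (hclose z hz)
  have hslit : ∀ z ∈ Q, exp (L₁ z - L₂ z) ∈ slitPlane := fun z hz ↦
    mem_slitPlane_iff_arg.2 ⟨fun h ↦ by
      linarith [(abs_le.1 (harg z hz)).2, Real.pi_gt_three], exp_ne_zero _⟩
  have h := congrArg im (sub_eq_log_sub_log hQ (hL₁.sub hL₂) hslit hx hy)
  simp only [Pi.sub_apply, sub_im, log_im] at h
  rw [sub_sub_sub_comm, h]
  exact (abs_sub _ _).trans (by linarith [harg x hx, harg y hy])

/-- Together with the segment `[-η, η]`, a connected set joining `η` to `-η` away from `0` winds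
around one side of the segment near `0`. -/
theorem not_hasLogOn_of_im_neg {Q : Set ℂ} (hQ : IsPreconnected Q) {d η : ℝ} (hd : 0 < d)
    (hη : 0 ≤ η) (hdQ : ∀ z ∈ Q, d ≤ ‖z‖) (hηQ : (η : ℂ) ∈ Q) (hηQ' : (-η : ℂ) ∈ Q) {α₁ α₂ : ℂ}
    (h₁ : ‖α₁‖ ≤ d / 10) (h₂ : ‖α₂‖ ≤ d / 10) (him₁ : 0 < α₁.im) (him₂ : α₂.im < 0)
    (hlog : HasLogOn (Q ∪ ofReal '' Icc (-η) η) α₁) :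
    ¬HasLogOn (Q ∪ ofReal '' Icc (-η) η) α₂ := by
  rintro ⟨L₂, hL₂, hexp₂⟩
  obtain ⟨L₁, hL₁, hexp₁⟩ := hlog
  have hdη : d ≤ η := (hdQ η hηQ).trans_eq (by rw [norm_real, Real.norm_of_nonneg hη])
  have hQ' := abs_im_sub_sub_im_sub_le hQ hd hdQ h₁ h₂ (hL₁.mono subset_union_left)
    (hL₂.mono subset_union_left) (fun z hz ↦ hexp₁ z (Or.inl hz)) (fun z hz ↦ hexp₂ z (Or.inl hz))
    hηQ hηQ'
  rw [im_sub_eq_arg_sub_arg him₁.ne' hη (hL₁.mono subset_union_right) fun z hz ↦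
    hexp₁ z (Or.inr hz), im_sub_eq_arg_sub_arg him₂.ne hη (hL₂.mono subset_union_right) fun z hz ↦
    hexp₂ z (Or.inr hz)] at hQ'
  linarith [(abs_le.1 hQ').2, pi_sub_le_arg_sub_arg (hd.trans_le hdη) (by linarith) him₁,
    arg_sub_arg_le_sub_pi (hd.trans_le hdη) (by linarith) him₂, Real.pi_gt_three]

end Crossing

section NotJoined

variable {Ω : Set ℂ} {f : ℂ → ℂ}

theorem eq_zero_of_norm_sub_ofReal_le {w : ℂ} {t : ℝ} (h : ‖w - t‖ ≤ |t| / 2) (hw : w.re = 0) :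
    t = 0 := by
  have hre := (abs_re_le_norm _).trans h
  rw [sub_re, hw, ofReal_re, zero_sub, abs_neg] at hre
  exact abs_eq_zero.1 (by linarith [abs_nonneg t])

theorem mul_im_pos_of_norm_sub_le {α : ℂ} {τ : ℝ} (hτ : τ ≠ 0)
    (h : ‖(τ : ℂ) * I - α‖ ≤ ‖α‖ / 2) : 0 < τ * α.im := by
  have hsq : ‖(τ : ℂ) * I - α‖ ^ 2 ≤ ‖α‖ ^ 2 := by
    gcongr
    linarith [norm_nonneg α]
  rw [← normSq_eq_norm_sq, ← normSq_eq_norm_sq, normSq_apply, normSq_apply] at hsq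
  simp only [sub_re, re_ofReal_mul, I_re, mul_zero, zero_sub, sub_im, im_ofReal_mul, I_im,
    mul_one] at hsq
  nlinarith [sq_pos_of_ne_zero hτ]

theorem exists_re_eq_zero_mul_im_pos (hopen : ∀ U ⊆ Ω, IsOpen U → IsOpen (f '' U)) {δ : ℝ}
    (h0 : (f 0).re = 0) (hδ : ∀ α : ℂ, ‖α‖ < δ → α ∈ Ω ∧ ‖f α - f 0 - α‖ ≤ ‖α‖ / 2) {ε : ℝ}
    (hε : 0 < ε) (hεδ : ε ≤ δ) {σ : ℝ} (hσ : σ ≠ 0) :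
    ∃ α : ℂ, ‖α‖ < ε ∧ (f α).re = 0 ∧ (f α).im ≠ (f 0).im ∧ 0 < σ * α.im := by
  have hball : ∀ α ∈ ball (0 : ℂ) ε, ‖α‖ < δ := fun α hα ↦ (mem_ball_zero_iff.1 hα).trans_le hεδ
  have hnhds : f '' ball 0 ε ∈ 𝓝 (f 0) :=
    (hopen _ (fun α hα ↦ (hδ α (hball α hα)).1) isOpen_ball).mem_nhds
      (mem_image_of_mem f (mem_ball_self hε))
  obtain ⟨s, ⟨α, hα, hfα⟩, hs : 0 < s⟩ :=
    ((tendsto_add_ofReal_mul_mul_I (f 0) σ).eventually hnhds |>.and self_mem_nhdsWithin).exists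
  have hsσ : σ * s ≠ 0 := mul_ne_zero hσ hs.ne'
  have him : 0 < σ * s * α.im := mul_im_pos_of_norm_sub_le hsσ (by
    simpa only [hfα, add_sub_cancel_left] using (hδ α (hball α hα)).2)
  refine ⟨α, mem_ball_zero_iff.1 hα, by simp [hfα, h0], ?_, ?_⟩
  · rw [hfα, add_im, im_ofReal_mul, I_im, mul_one]
    exact fun h ↦ hsσ (add_eq_left.1 h)
  · exact pos_of_mul_pos_left (by rwa [mul_right_comm] at him) hs.le

theorem not_joinedIn_of_norm_sub_le (hΩ : IsOpen Ω) (hΩc : Convex ℝ Ω) (hf : ContinuousOn f Ω)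
    (hopen : ∀ U ⊆ Ω, IsOpen U → IsOpen (f '' U)) (h0 : (f 0).re = 0) {δ : ℝ}
    (hδ : ∀ α : ℂ, ‖α‖ < δ → α ∈ Ω ∧ ‖f α - f 0 - α‖ ≤ ‖α‖ / 2) {η : ℝ} (hη : 0 < η)
    (hηδ : η < δ) :
    ¬JoinedIn {z | z ∈ Ω ∧ z ≠ 0 ∧ ((f z).re ≠ 0 ∨ (f z).im = (f 0).im)} η (-η) := by
  rintro ⟨γ, hγ⟩
  have hγc : IsCompact (range γ) := isCompact_range γ.continuous
  have hηγ : (η : ℂ) ∈ range γ := ⟨0, γ.source⟩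
  obtain ⟨_, ⟨t₀, rfl⟩, ht₀⟩ :=
    hγc.exists_isMinOn ⟨_, hηγ⟩ (f := fun z ↦ ‖z‖) continuous_norm.continuousOn
  set d := ‖γ t₀‖
  have hd : 0 < d := norm_pos_iff.2 (hγ t₀).2.1
  have hdη : d ≤ η := (ht₀ hηγ).trans_eq (by simp only [norm_real, Real.norm_of_nonneg hη.le])
  set Γ : Set ℂ := range γ ∪ ofReal '' Icc (-η) η
  have hseg : ∀ t ∈ Icc (-η) η, ‖(t : ℂ)‖ < δ := fun t ht ↦ by
    rw [norm_real, Real.norm_eq_abs]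
    exact (abs_le.2 ht).trans_lt hηδ
  have hΓ : IsCompact Γ := hγc.union (isCompact_Icc.image continuous_ofReal)
  have hΓΩ : Γ ⊆ Ω := by
    rintro _ (⟨t, rfl⟩ | ⟨t, ht, rfl⟩)
    exacts [(hγ t).1, (hδ t (hseg t ht)).1]
  have hΓim : ∀ z ∈ Γ, (f z).re = 0 → (f z).im = (f 0).im := by
    rintro _ (⟨t, rfl⟩ | ⟨t, ht, rfl⟩) hz
    · exact (hγ t).2.2.resolve_left fun h ↦ h hz
    · have ht0 := eq_zero_of_norm_sub_ofReal_le (w := f t - f 0) (t := t)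
        (by simpa using (hδ t (hseg t ht)).2) (by rw [sub_re, hz, h0, sub_zero])
      rw [ht0, ofReal_zero]
  have hside : ∀ σ : ℝ, σ ≠ 0 → ∃ α : ℂ, ‖α‖ < d / 10 ∧ 0 < σ * α.im ∧ HasLogOn Γ α := by
    intro σ hσ
    obtain ⟨α, hα, hre, him, hσα⟩ :=
      exists_re_eq_zero_mul_im_pos hopen h0 hδ (ε := d / 10) (by positivity) (by linarith) hσ
    exact ⟨α, hα, hσα, hasLogOn_of_re_eq_zero hΩ hΩc hf hopen hΓ hΓΩ hΓim
      (fun h ↦ him (hΓim α h hre)) hre⟩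
  obtain ⟨α₁, hα₁, him₁, hlog₁⟩ := hside 1 one_ne_zero
  obtain ⟨α₂, hα₂, him₂, hlog₂⟩ := hside (-1) (neg_ne_zero.2 one_ne_zero)
  exact not_hasLogOn_of_im_neg (isPreconnected_range γ.continuous) hd hη.le (fun z hz ↦ ht₀ hz) hηγ
    ⟨1, γ.target⟩ hα₁.le hα₂.le (by linarith) (by linarith) hlog₁ hlog₂

theorem eventually_norm_sub_sub_le_half (hΩ : IsOpen Ω) (hf : DifferentiableOn ℂ f Ω) {z₀ : ℂ}
    (hz₀ : z₀ ∈ Ω) (hd : deriv f z₀ ≠ 0) : ∀ᶠ α : ℂ in 𝓝 0,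
    z₀ + α * (deriv f z₀)⁻¹ ∈ Ω ∧ ‖f (z₀ + α * (deriv f z₀)⁻¹) - f z₀ - α‖ ≤ ‖α‖ / 2 := by
  set e := (deriv f z₀)⁻¹ with he
  have hlin : HasDerivAt (fun α : ℂ ↦ z₀ + α * e) e 0 := by
    simpa using ((hasDerivAt_id (0 : ℂ)).mul_const e).const_add z₀
  have hz₀' : z₀ + 0 * e = z₀ := by rw [zero_mul, add_zero]
  have hderiv : HasDerivAt (fun α : ℂ ↦ f (z₀ + α * e)) (deriv f z₀ * e) 0 :=
    HasDerivAt.comp (h₂ := f) 0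
      (by rw [hz₀']; exact (hf.differentiableAt (hΩ.mem_nhds hz₀)).hasDerivAt) hlin
  rw [he, mul_inv_cancel₀ hd, ← he] at hderiv
  filter_upwards [hlin.continuousAt.eventually (hΩ.mem_nhds (show z₀ + 0 * e ∈ Ω by rwa [hz₀'])),
    (hasDerivAt_iff_isLittleO.1 hderiv).def one_half_pos] with α hα hlittle
  refine ⟨hα, ?_⟩
  simpa only [hz₀', sub_zero, smul_eq_mul, mul_one, one_div, inv_mul_eq_div] using hlittle

theorem eventually_not_joinedIn (hΩ : IsOpen Ω) (hΩc : Convex ℝ Ω) (hf : DifferentiableOn ℂ f Ω)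
    (hopen : ∀ U ⊆ Ω, IsOpen U → IsOpen (f '' U)) {z₀ : ℂ} (hz₀ : z₀ ∈ Ω) (h0 : (f z₀).re = 0)
    (hd : deriv f z₀ ≠ 0) : ∀ᶠ η : ℝ in 𝓝[>] 0,
    ¬JoinedIn {z | z ∈ Ω ∧ z ≠ z₀ ∧ ((f z).re ≠ 0 ∨ (f z).im = (f z₀).im)}
      (z₀ + η * (deriv f z₀)⁻¹) (z₀ + -η * (deriv f z₀)⁻¹) := by
  obtain ⟨δ, hδ, hhalf⟩ :=
    Metric.eventually_nhds_iff.1 (eventually_norm_sub_sub_le_half hΩ hf hz₀ hd)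
  have he : (deriv f z₀)⁻¹ ≠ 0 := inv_ne_zero hd
  set e := (deriv f z₀)⁻¹
  let φ : ℂ ≃ₜ ℂ := (Homeomorph.mulRight₀ e he).trans (Homeomorph.addLeft z₀)
  have hφ : ∀ α, φ α = z₀ + α * e := fun _ ↦ rfl
  have hφ0 : φ 0 = z₀ := by rw [hφ, zero_mul, add_zero]
  have hφc : Convex ℝ (φ ⁻¹' Ω) := (hΩc.translate_preimage_right z₀).is_linear_preimage
    (f := fun α ↦ α * e) (IsLinearMap.mk (fun x y ↦ add_mul x y e) fun c x ↦ smul_mul_assoc c x e)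
  filter_upwards [Ioo_mem_nhdsGT hδ] with η hη hjoin
  refine not_joinedIn_of_norm_sub_le (f := f ∘ φ) (hΩ.preimage φ.continuous) hφc
    (hf.continuousOn.comp φ.continuous.continuousOn fun _ h ↦ h)
    (fun U hU hUo ↦ ?_) (by rwa [comp_apply, hφ0]) (δ := δ) (fun α hα ↦ ?_) hη.1 hη.2 ?_
  · rw [image_comp]
    exact hopen _ (image_subset_iff.2 hU) (φ.isOpenMap U hUo)
  · rw [comp_apply, comp_apply, hφ0]
    exact hhalf (by rwa [dist_zero_right])
  · rw [← hφ, ← hφ] at hjoin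
    have h := hjoin.map φ.symm.continuous
    rw [φ.symm_apply_apply, φ.symm_apply_apply] at h
    refine h.mono ?_
    rintro _ ⟨z, ⟨hz, hne, hor⟩, rfl⟩
    refine ⟨by rwa [mem_preimage, φ.apply_symm_apply], fun h0 ↦ hne ?_, ?_⟩
    · rw [← φ.apply_symm_apply z, h0, hφ0]
    · rwa [comp_apply, comp_apply, hφ0, φ.apply_symm_apply]

end NotJoined

/-! ### Counting nodal domains -/

section CountingLevels

theorem card_le_card_zerothHomotopy {X ι : Type*} [TopologicalSpace X] [Fintype ι] {S : Set X}
    {T : ι → Set X} (hST : ∀ i, S ⊆ T i) {p q : ι → X} (hp : ∀ i, p i ∈ S) (hq : ∀ i, q i ∈ S)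
    (hself : ∀ i, ¬JoinedIn (T i) (p i) (q i))
    (hother : ∀ i j, i ≠ j → JoinedIn (T i) (p j) (q j)) :
    (Fintype.card ι : ℕ∞) ≤ ENat.card (ZerothHomotopy S) := by
  classical
  rcases finite_or_infinite (ZerothHomotopy S) with hfin | hinf
  · let ψ : ι → ZerothHomotopy S → ℝ := fun i ↦ ZerothHomotopy.lift
      (fun x ↦ if JoinedIn (T i) (p i) x then 1 else 0) fun x y γ ↦ by
        have hxy : JoinedIn (T i) x y := (joinedIn_iff_joined x.2 y.2).2 ⟨γ⟩ |>.mono (hST i)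
        exact if_congr ⟨fun h ↦ h.trans hxy, fun h ↦ h.trans hxy.symm⟩ rfl rfl
    let φ : ι → Module.Dual ℝ (ZerothHomotopy S → ℝ) := fun j ↦
      LinearMap.proj (.mk ⟨p j, hp j⟩) - LinearMap.proj (.mk ⟨q j, hq j⟩)
    have hφ : ∀ i j, φ j (ψ i) = (if JoinedIn (T i) (p i) (p j) then 1 else 0) -
      if JoinedIn (T i) (p i) (q j) then 1 else 0 := fun _ _ ↦ rfl
    have hli : LinearIndependent ℝ ψ := by
      refine .of_pairwise_dual_eq_zero_one ψ φ (fun j i hji ↦ ?_) fun i ↦ ?_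
      · have hj := hother i j hji.symm
        exact (hφ i j).trans (sub_eq_zero.2
          (if_congr ⟨fun h ↦ h.trans hj, fun h ↦ h.trans hj.symm⟩ rfl rfl))
      · rw [hφ, if_pos (JoinedIn.refl (hST i (hp i))), if_neg (hself i), sub_zero]
    have := Fintype.ofFinite (ZerothHomotopy S)
    rw [ENat.card_eq_coe_fintype_card, Nat.cast_le]
    exact hli.fintype_card_le_finrank.trans_eq (Module.finrank_fintype_fun_eq_card ℝ)
  · rw [ENat.card_eq_top_of_infinite]
    exact le_top

/-- The points of `Ω` off the zero set of `re f`; its path components are the nodal domains of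
`re f` when `Ω` is open and `f` is holomorphic. -/
def nodalComplement (f : ℂ → ℂ) (Ω : Set ℂ) : Set ℂ :=
  {z | z ∈ Ω ∧ (f z).re ≠ 0}

theorem joinedIn_add_ofReal_mul {T : Set ℂ} {z e : ℂ} {η : ℝ} (hη : 0 ≤ η)
    (hT : ∀ t : ℝ, |t| ≤ η → z + t * e ∈ T) : JoinedIn T (z + η * e) (z + -η * e) := by
  have hηη : -η ≤ η := by linarith
  have h := ((convex_Icc (-η) η).isPathConnected ⟨η, right_mem_Icc.2 hηη⟩).joinedIn _
    (right_mem_Icc.2 hηη) _ (left_mem_Icc.2 hηη)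
  have h := h.map (f := fun t : ℝ ↦ z + t * e) (by fun_prop)
  rw [ofReal_neg] at h
  exact h.mono (image_subset_iff.2 fun t ht ↦ hT t (abs_le.2 ht))

theorem eventually_forall_abs_le {p : ℂ → Prop} (hp : ∀ᶠ α in 𝓝 0, p α) :
    ∀ᶠ η : ℝ in 𝓝[>] 0, ∀ t : ℝ, |t| ≤ η → p t := by
  obtain ⟨δ, hδ, h⟩ := Metric.eventually_nhds_iff.1 hp
  filter_upwards [Ioo_mem_nhdsGT hδ] with η hη t ht
  exact h (by rw [dist_zero_right, norm_real, Real.norm_eq_abs]; exact ht.trans_lt hη.2)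

variable {Ω : Set ℂ} {f : ℂ → ℂ}

theorem eventually_forall_abs_le_mem (hΩ : IsOpen Ω) (hf : DifferentiableOn ℂ f Ω) {z₀ : ℂ}
    (hz₀ : z₀ ∈ Ω) (h0 : (f z₀).re = 0) (hd : deriv f z₀ ≠ 0) {F : Set ℂ} (hF : F.Finite) :
    ∀ᶠ η : ℝ in 𝓝[>] 0, ∀ t : ℝ, |t| ≤ η → z₀ + t * (deriv f z₀)⁻¹ ∈ Ω ∧
      z₀ + t * (deriv f z₀)⁻¹ ∉ F \ {z₀} ∧ ((f (z₀ + t * (deriv f z₀)⁻¹)).re = 0 → t = 0) := by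
  have hcont : Continuous fun α : ℂ ↦ z₀ + α * (deriv f z₀)⁻¹ := by fun_prop
  have hsep : ∀ᶠ α : ℂ in 𝓝 0, z₀ + α * (deriv f z₀)⁻¹ ∉ F \ {z₀} :=
    hcont.continuousAt.eventually (hF.sdiff.isClosed.isOpen_compl.mem_nhds (by simp))
  filter_upwards [eventually_forall_abs_le
    ((eventually_norm_sub_sub_le_half hΩ hf hz₀ hd).and hsep)] with η hη t ht
  obtain ⟨⟨hmem, hnorm⟩, hnotMem⟩ := hη t ht
  rw [norm_real, Real.norm_eq_abs] at hnorm
  exact ⟨hmem, hnotMem, fun hre ↦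
    eq_zero_of_norm_sub_ofReal_le hnorm (by rw [sub_re, hre, h0, sub_zero])⟩

/-- Each regular point of the level set is a crossing between two nodal domains, and the graph with
the nodal domains as vertices and these crossings as edges is a forest. -/
theorem card_le_card_nodalComplement_of_deriv_ne_zero (hΩ : IsOpen Ω) (hΩc : Convex ℝ Ω)
    (hf : DifferentiableOn ℂ f Ω) (hopen : ∀ U ⊆ Ω, IsOpen U → IsOpen (f '' U)) {c : ℝ}
    {P : Finset ℂ} (hP : ∀ z ∈ P, z ∈ Ω ∧ f z = c * I ∧ deriv f z ≠ 0) :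
    (P.card : ℕ∞) ≤ ENat.card (ZerothHomotopy (nodalComplement f Ω)) := by
  have hre : ∀ z ∈ P, (f z).re = 0 := fun z hz ↦ by simp [(hP z hz).2.1]
  have him : ∀ z ∈ P, (f z).im = c := fun z hz ↦ by simp [(hP z hz).2.1]
  let T : P → Set ℂ := fun z ↦ {w | w ∈ Ω ∧ w ≠ z ∧ ((f w).re ≠ 0 ∨ (f w).im = (f z).im)}
  obtain ⟨η, hη, hη0 : 0 < η⟩ := ((eventually_all.2 fun z : P ↦
    (eventually_forall_abs_le_mem hΩ hf (hP z z.2).1 (hre z z.2) (hP z z.2).2.2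
      P.finite_toSet).and (eventually_not_joinedIn hΩ hΩc hf hopen (hP z z.2).1 (hre z z.2)
      (hP z z.2).2.2)).and self_mem_nhdsWithin).exists
  have hmem : ∀ (z : P) (t : ℝ), |t| = η →
      (z + t * (deriv f z)⁻¹ : ℂ) ∈ nodalComplement f Ω :=
    fun z t ht ↦ ⟨((hη z).1 t ht.le).1, fun h ↦ hη0.ne' (by
      rw [← ht, ((hη z).1 t ht.le).2.2 h, abs_zero])⟩
  rw [← Fintype.card_coe]
  refine card_le_card_zerothHomotopy (T := T) (p := fun z ↦ z + η * (deriv f z)⁻¹)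
    (q := fun z ↦ z + -η * (deriv f z)⁻¹) (fun z w hw ↦ ⟨hw.1, ?_, Or.inl hw.2⟩)
    (fun z ↦ hmem z η (abs_of_pos hη0)) (fun z ↦ ?_) (fun z ↦ (hη z).2) fun z w hzw ↦ ?_
  · rintro rfl
    exact hw.2 (hre z z.2)
  · simpa only [ofReal_neg] using hmem z (-η) (by rw [abs_neg, abs_of_pos hη0])
  · refine joinedIn_add_ofReal_mul hη0.le fun t ht ↦ ?_
    obtain ⟨hΩt, hsep, ht0⟩ := (hη w).1 t ht
    refine ⟨hΩt, fun h ↦ hsep ⟨h ▸ z.2, fun h' ↦ hzw (Subtype.ext (h.symm.trans h'))⟩, ?_⟩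
    by_contra! h
    refine h.2 ?_
    rw [ht0 h.1, ofReal_zero, zero_mul, add_zero, him w w.2, him z z.2]

end CountingLevels

section ManyDomains

theorem countable_setOf_deriv_eq_zero {f : ℂ → ℂ} {Ω : Set ℂ} (hΩ : IsOpen Ω)
    (hΩc : IsPreconnected Ω) (hf : DifferentiableOn ℂ f Ω)
    (hopen : ∀ U ⊆ Ω, IsOpen U → IsOpen (f '' U)) : {z | z ∈ Ω ∧ deriv f z = 0}.Countable := by
  by_cases hne : ∀ z ∈ Ω, deriv f z = 0
  · rcases Ω.eq_empty_or_nonempty with rfl | ⟨z, hz⟩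
    · simp
    · have himage : f '' Ω = {f z} := eq_singleton_iff_unique_mem.2 ⟨mem_image_of_mem f hz,
        forall_mem_image.2 fun w hw ↦ hΩ.is_const_of_deriv_eq_zero hΩc hf hne hw hz⟩
      exact absurd (himage ▸ hopen Ω Subset.rfl hΩ) (not_isOpen_singleton _)
  · push Not at hne
    obtain ⟨z, hz, hz0⟩ := hne
    have hmem := (hf.analyticOnNhd hΩ).deriv.preimage_zero_mem_codiscreteWithin hz0 hz
      ⟨⟨z, hz⟩, hΩc⟩
    rw [preimage_compl] at hmem
    exact ((HereditarilyLindelofSpace.isLindelof _).countable_of_isDiscrete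
      (isDiscrete_of_codiscreteWithin hmem)).mono fun w hw ↦ And.symm hw

theorem exists_finset_of_eq_ofReal_mul_I {f : ℂ → ℂ} {Ω : Set ℂ} (hΩ : IsOpen Ω)
    (hΩc : Convex ℝ Ω) (hf : DifferentiableOn ℂ f Ω)
    (hopen : ∀ U ⊆ Ω, IsOpen U → IsOpen (f '' U)) {N : ℕ}
    (hN : ENat.card (ZerothHomotopy (nodalComplement f Ω)) ≤ N) {a b : ℝ} (hab : a < b) :
    ∃ c ∈ Ioo a b, ∃ P : Finset ℂ, P.card ≤ N ∧ ∀ z ∈ Ω, f z = c * I → z ∈ P := by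
  obtain ⟨c, hc, hcab⟩ := (((countable_setOf_deriv_eq_zero hΩ hΩc.isPreconnected hf hopen).image
    fun z ↦ (f z).im).dense_compl ℝ).exists_between hab
  have hcard : ∀ P : Finset ℂ, (P : Set ℂ) ⊆ {z | z ∈ Ω ∧ f z = c * I} → P.card ≤ N := by
    refine fun P hP ↦ Nat.cast_le.1 ((card_le_card_nodalComplement_of_deriv_ne_zero hΩ hΩc hf
      hopen (c := c) fun z hz ↦ ?_).trans hN)
    exact ⟨(hP hz).1, (hP hz).2, fun h ↦ hc ⟨z, ⟨(hP hz).1, h⟩, by simp [(hP hz).2]⟩⟩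
  have hfin : {z | z ∈ Ω ∧ f z = c * I}.Finite := by
    by_contra hinf
    obtain ⟨P, hP, hPc⟩ := Set.Infinite.exists_subset_card_eq hinf (N + 1)
    exact absurd (hcard P hP) (by omega)
  exact ⟨c, hcab, hfin.toFinset, hcard _ hfin.coe_toFinset.le,
    fun z hz hzc ↦ hfin.mem_toFinset.2 ⟨hz, hzc⟩⟩

/-- Off the finitely many points where `f` takes two suitable imaginary values `c₁ * I` and
`c₂ * I`, the function `f` omits both of them, so Schottky's theorem applies. -/
theorem exists_bound_of_card_nodalComplement_le (N : ℕ) {r R : ℝ} (hr : 0 < r) (hrR : r ≤ R)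
    (hR : R < 1) (A : ℝ) : ∃ B : ℝ, ∀ f : ℂ → ℂ, DifferentiableOn ℂ f (ball 0 1) →
    ENat.card (ZerothHomotopy (nodalComplement f (ball 0 1))) ≤ N →
    (∀ z ∈ ball (0 : ℂ) r, ‖f z‖ ≤ A) → ∀ z ∈ ball (0 : ℂ) R, ‖f z‖ ≤ B := by
  obtain ⟨B, hB⟩ := exists_bound_of_omits_off_finset (2 * N) hr hrR hR (A + 1)
  refine ⟨max A (3 * B + 1), fun f hf hN hA z hz ↦ ?_⟩
  rcases (hf.analyticOnNhd isOpen_ball).is_constant_or_isOpen (convex_ball _ _).isPreconnected with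
    ⟨w, hw⟩ | hopen
  · rw [hw z (ball_subset_ball hR.le hz), ← hw 0 (mem_ball_self one_pos)]
    exact le_max_of_le_left (hA 0 (mem_ball_self hr))
  refine le_max_of_le_right ?_
  obtain ⟨c₁, hc₁, P₁, hP₁, hmem₁⟩ := exists_finset_of_eq_ofReal_mul_I isOpen_ball
    (convex_ball 0 1) hf hopen hN one_pos
  obtain ⟨c₂, hc₂, P₂, hP₂, hmem₂⟩ := exists_finset_of_eq_ofReal_mul_I isOpen_ball
    (convex_ball 0 1) hf hopen hN (by norm_num : (2 : ℝ) < 3)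
  classical
  have hnorm₁ : ‖(c₁ : ℂ) * I‖ = c₁ := by simp [abs_of_pos hc₁.1]
  have hnorm : ‖(c₂ - c₁ : ℂ) * I‖ = c₂ - c₁ := by
    rw [norm_mul, norm_I, mul_one, ← ofReal_sub, norm_real,
      Real.norm_of_nonneg (by linarith [hc₁.2, hc₂.1])]
  have hlt : 1 < c₂ - c₁ := by linarith [hc₁.2, hc₂.1]
  have hne : (c₂ - c₁ : ℂ) * I ≠ 0 := norm_pos_iff.1 (hnorm ▸ one_pos.trans hlt)
  have hquot := hB (fun z ↦ (f z - c₁ * I) / ((c₂ - c₁) * I)) ((hf.sub_const _).div_const _)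
    (P₁ ∪ P₂) ((Finset.card_union_le _ _).trans (by omega)) (fun w hw hw01 ↦ ?_)
    (fun w hw ↦ ?_) z hz
  · rw [norm_div, hnorm, div_le_iff₀ (by linarith)] at hquot
    have hB0 : 0 ≤ B := nonneg_of_mul_nonneg_left ((norm_nonneg _).trans hquot) (by linarith)
    calc ‖f z‖ ≤ ‖f z - c₁ * I‖ + ‖(c₁ : ℂ) * I‖ := norm_le_norm_sub_add _ _
      _ ≤ B * (c₂ - c₁) + c₁ := add_le_add hquot hnorm₁.le
      _ ≤ B * 3 + 1 := by gcongr <;> linarith [hc₁.1, hc₁.2, hc₂.2]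
      _ = 3 * B + 1 := by ring
  · refine hw.2 (Finset.mem_union.2 ?_)
    rcases hw01 with h0 | h1
    · exact Or.inl (hmem₁ w hw.1 (sub_eq_zero.1 ((div_eq_zero_iff.1 h0).resolve_right hne)))
    · refine Or.inr (hmem₂ w hw.1 ?_)
      linear_combination (div_eq_one_iff_eq hne).1 h1
  · rw [norm_div, hnorm]
    calc ‖f w - c₁ * I‖ / (c₂ - c₁) ≤ ‖f w - c₁ * I‖ := div_le_self (norm_nonneg _) hlt.le
      _ ≤ ‖f w‖ + ‖(c₁ : ℂ) * I‖ := norm_sub_le _ _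
      _ ≤ A + 1 := add_le_add (hA w hw) (hnorm₁.trans_le hc₁.2.le)

end ManyDomains

/-! ### Comparing real parts with common zeros -/

section MaximumPrinciple

variable {f g : ℂ → ℂ} {V : Set ℂ} {z : ℂ}

theorem re_le_re_of_forall_mem_frontier (hV : Bornology.IsBounded V) (hf : DiffContOnCl ℂ f V)
    (hg : DiffContOnCl ℂ g V) (hfg : ∀ z ∈ frontier V, (f z).re ≤ (g z).re)
    (hz : z ∈ closure V) : (f z).re ≤ (g z).re := by
  have hexp : ∀ w, ‖exp (f w - g w)‖ ≤ 1 ↔ (f w).re ≤ (g w).re := fun w ↦ by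
    rw [norm_exp, Real.exp_le_one_iff, sub_re, sub_nonpos]
  exact (hexp z).1 (norm_le_of_forall_mem_frontier_norm_le hV
    (differentiable_exp.comp_diffContOnCl (hf.sub hg)) (fun w hw ↦ (hexp w).2 (hfg w hw)) hz)

theorem abs_re_le_re_of_forall_mem_frontier (hV : Bornology.IsBounded V)
    (hf : DiffContOnCl ℂ f V) (hg : DiffContOnCl ℂ g V)
    (hfg : ∀ z ∈ frontier V, |(f z).re| ≤ (g z).re) (hz : z ∈ closure V) :
    |(f z).re| ≤ (g z).re := by
  refine abs_le'.2 ⟨re_le_re_of_forall_mem_frontier hV hf hg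
    (fun w hw ↦ (abs_le'.1 (hfg w hw)).1) hz, ?_⟩
  exact re_le_re_of_forall_mem_frontier hV hf.neg hg (fun w hw ↦ (abs_le'.1 (hfg w hw)).2) hz

theorem abs_re_le_re_of_forall_mem_frontier_of_pos (hVo : IsOpen V)
    (hV : Bornology.IsBounded V) (hf : DiffContOnCl ℂ f V) (hg : DiffContOnCl ℂ g V)
    (hfg : ∀ z ∈ frontier V, |(f z).re| ≤ |(g z).re|)
    (hZ : ∀ z ∈ V, (g z).re = 0 → (f z).re = 0) (hz : z ∈ V) (hgz : 0 < (g z).re) :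
    |(f z).re| ≤ (g z).re := by
  set U : Set ℂ := V ∩ (fun w ↦ (g w).re) ⁻¹' Ioi 0
  have hUV : U ⊆ V := inter_subset_left
  have hUo : IsOpen U := (continuous_re.comp_continuousOn
    hg.differentiableOn.continuousOn).isOpen_inter_preimage hVo isOpen_Ioi
  have hclosure : ∀ w ∈ closure U, 0 ≤ (g w).re := by
    have hclosed : IsClosed (closure V ∩ (fun w ↦ (g w).re) ⁻¹' Ici 0) :=
      (continuous_re.comp_continuousOn hg.continuousOn).preimage_isClosed_of_isClosed
        isClosed_closure isClosed_Ici
    exact fun w hw ↦ (closure_minimal (inter_subset_inter subset_closure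
      (preimage_mono Ioi_subset_Ici_self)) hclosed hw).2
  refine abs_re_le_re_of_forall_mem_frontier (hV.subset hUV) (hf.mono hUV) (hg.mono hUV)
    (fun w hw ↦ ?_) (subset_closure ⟨hz, hgz⟩)
  rw [hUo.frontier_eq] at hw
  have hw0 := hclosure w hw.1
  by_cases hwV : w ∈ V
  · have hgw : (g w).re = 0 := le_antisymm (not_lt.1 fun h ↦ hw.2 ⟨hwV, h⟩) hw0
    rw [hZ w hwV hgw, hgw, abs_zero]
  · refine (hfg w ?_).trans_eq (abs_of_nonneg hw0)
    exact hVo.frontier_eq ▸ ⟨closure_mono hUV hw.1, hwV⟩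

theorem abs_re_le_mul_abs_re_of_forall_mem_frontier (hVo : IsOpen V)
    (hV : Bornology.IsBounded V) (hf : DiffContOnCl ℂ f V) (hg : DiffContOnCl ℂ g V) {C : ℝ}
    (hC : 0 < C) (hfg : ∀ z ∈ frontier V, |(f z).re| ≤ C * |(g z).re|)
    (hZ : ∀ z ∈ V, (g z).re = 0 → (f z).re = 0) (hz : z ∈ V) :
    |(f z).re| ≤ C * |(g z).re| := by
  have habs : ∀ (ε : ℝ) (w : ℂ), |ε| = 1 → |(((ε * C : ℝ) : ℂ) * g w).re| = C * |(g w).re| :=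
    fun ε w hε ↦ by rw [re_ofReal_mul, abs_mul, abs_mul, hε, one_mul, abs_of_pos hC]
  have hsign : ∀ ε : ℝ, |ε| = 1 → 0 < ε * (g z).re → |(f z).re| ≤ C * |(g z).re| := by
    intro ε hε hpos
    have hre : (((ε * C : ℝ) : ℂ) * g z).re = C * (ε * (g z).re) := by
      rw [re_ofReal_mul]; ring
    have hle := abs_re_le_re_of_forall_mem_frontier_of_pos hVo hV hf
      (hg.const_smul ((ε * C : ℝ) : ℂ)) (fun w hw ↦ (hfg w hw).trans_eq (habs ε w hε).symm)
      (fun w hw h ↦ hZ w hw (abs_eq_zero.1 ((mul_eq_zero.1 ((habs ε w hε).symm.trans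
        (abs_eq_zero.2 h))).resolve_left hC.ne'))) hz
      (hre.symm ▸ mul_pos hC hpos)
    exact hle.trans ((le_abs_self _).trans_eq (habs ε z hε))
  rcases lt_trichotomy (g z).re 0 with h | h | h
  · exact hsign (-1) (by norm_num) (by linarith)
  · rw [hZ z hz h, h, abs_zero, mul_zero]
  · exact hsign 1 (by norm_num) (by linarith)

end MaximumPrinciple

section ZeroDirections

variable {g : ℂ → ℂ} {x : ℂ}

theorem frequently_re_ne_zero {Ω : Set ℂ} (hΩ : IsPreconnected Ω) (hg : AnalyticOnNhd ℂ g Ω)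
    (hne : ∃ z ∈ Ω, (g z).re ≠ 0) (hx : x ∈ Ω) : ∃ᶠ z in 𝓝 x, (g z).re ≠ 0 := by
  intro h
  replace h : ∀ᶠ z in 𝓝 x, (g z).re = 0 := h.mono fun z hz ↦ not_not.1 hz
  rcases (hg x hx).eventually_constant_or_nhds_le_map_nhds with hconst | hmap
  · obtain ⟨z, hz, hz0⟩ := hne
    rw [hg.eqOn_of_preconnected_of_eventuallyEq analyticOnNhd_const hΩ hx hconst hz] at hz0
    exact hz0 h.self_of_nhds
  · have hmem : {0} ∈ 𝓝 (g x).re := ((isOpenMap_re.nhds_le (g x)).trans (map_mono hmap)) h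
    exact (interior_singleton (0 : ℝ)).le (mem_interior_iff_mem_nhds.2 hmem)

theorem exists_tendsto_sub_mul_logDeriv (hg : AnalyticAt ℂ g x)
    (hne : ¬∀ᶠ z in 𝓝 x, g z = g x) :
    ∃ m : ℕ, m ≠ 0 ∧ Tendsto (fun z ↦ (z - x) * logDeriv (g · - g x) z) (𝓝[≠] x) (𝓝 m) := by
  obtain ⟨m, h, hh, hh0, heq⟩ :=
    (hg.fun_sub analyticAt_const).exists_eventuallyEq_pow_smul_nonzero_iff.2
      fun h ↦ hne (h.mono fun z hz ↦ sub_eq_zero.1 hz)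
  refine ⟨m, ?_, ?_⟩
  · rintro rfl
    simpa [hh0.symm] using heq.self_of_nhds
  have hlim : Tendsto (fun z ↦ m + (z - x) * logDeriv h z) (𝓝[≠] x) (𝓝 m) := by
    have hcont : ContinuousAt (fun z ↦ m + (z - x) * logDeriv h z) x :=
      continuousAt_const.add ((continuousAt_id.sub continuousAt_const).mul
        (hh.deriv.continuousAt.div hh.continuousAt hh0))
    simpa [ContinuousAt] using hcont.mono_left nhdsWithin_le_nhds
  refine hlim.congr' ?_
  filter_upwards [self_mem_nhdsWithin, nhdsWithin_le_nhds heq.eventually_nhds,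
    nhdsWithin_le_nhds (hh.continuousAt.eventually_ne hh0),
    nhdsWithin_le_nhds hh.eventually_analyticAt] with z hzx hz hhz hhza
  have hzx0 : z - x ≠ 0 := sub_ne_zero.2 hzx
  have hpow : logDeriv (fun z ↦ (z - x) ^ m) z = m * (z - x)⁻¹ := by
    rw [logDeriv_fun_pow (by fun_prop)]
    simp [logDeriv_apply]
  have hlog : logDeriv (g · - g x) z = logDeriv (fun z ↦ (z - x) ^ m * h z) z := by
    simp only [logDeriv_apply, EventuallyEq.deriv_eq hz, hz.self_of_nhds, smul_eq_mul]
  rw [hlog, logDeriv_mul (f := fun z ↦ (z - x) ^ m) (g := h) z (pow_ne_zero _ hzx0) hhz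
    (by fun_prop) hhza.differentiableAt, hpow]
  field_simp

theorem eventually_im_sub_mul_deriv_ne_zero (hg : AnalyticAt ℂ g x)
    (hne : ∃ᶠ z in 𝓝 x, (g z).re ≠ 0) :
    ∀ᶠ z in 𝓝[≠] x, (g z).re = 0 → ((z - x) * deriv g z).im ≠ 0 := by
  by_cases hgx : (g x).re = 0
  · have hconst : ¬∀ᶠ z in 𝓝 x, g z = g x := fun h ↦
      hne (h.mono fun z hz ↦ not_not.2 (hz ▸ hgx))
    obtain ⟨m, hm, hlim⟩ := exists_tendsto_sub_mul_logDeriv hg hconst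
    have hm0 : 0 < (m : ℂ).re := by
      rw [natCast_re]
      exact_mod_cast Nat.pos_of_ne_zero hm
    filter_upwards [((continuous_re.tendsto _).comp hlim).eventually (lt_mem_nhds hm0),
      hg.eventually_eq_or_eventually_ne analyticAt_const |>.resolve_left hconst] with z hq hz hre
    have hsub : g z - g x = (g z - g x).im * I := Complex.ext (by simp [hre, hgx]) (by simp)
    have hmul : (z - x) * deriv g z = ((z - x) * logDeriv (g · - g x) z) * (g z - g x) := by
      rw [logDeriv_apply, deriv_sub_const]
      field_simp [sub_ne_zero.2 hz]
    rw [hmul, hsub, ← mul_assoc, mul_I_im, re_mul_ofReal]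
    refine mul_ne_zero hq.ne' fun h ↦ sub_ne_zero.2 hz ?_
    rw [hsub, h, ofReal_zero, zero_mul]
  · filter_upwards [nhdsWithin_le_nhds ((continuous_re.continuousAt.comp
      hg.continuousAt).eventually_ne hgx)] with z hz h
    exact absurd h hz

end ZeroDirections

section JointAsymptotics

theorem isBigO_of_isBigO_one_of_tendsto_ne_zero {α E : Type*} [Norm E] {u : α → E}
    {v : α → ℝ} {l : Filter α} {a : ℝ} (hu : u =O[l] fun _ ↦ (1 : ℝ))
    (hv : Tendsto v l (𝓝 a)) (ha : a ≠ 0) : u =O[l] v :=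
  (hu.trans (isBigO_const_const 1 ha l)).trans
    ((isEquivalent_const_iff_tendsto ha).2 hv).isBigO_symm

variable {ι X E : Type*} {φ : Filter ι} [TopologicalSpace X]

theorem isBigO_prod_principal_of_isCompact [Norm E] {E' : Type*} [SeminormedAddCommGroup E']
    {u : ι × X → E} {v : ι × X → E'} {K : Set X} (hK : IsCompact K)
    (h : ∀ x ∈ K, u =O[φ ×ˢ 𝓝 x] v) : u =O[φ ×ˢ 𝓟 K] v := by
  refine hK.induction_on (p := fun s ↦ u =O[φ ×ˢ 𝓟 s] v) (by simp)
    (fun s t hst ht ↦ ht.mono (prod_mono_right _ (principal_mono.2 hst)))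
    (fun s t hs ht ↦ ?_) fun x hx ↦ ?_
  · rw [← sup_principal, prod_sup]
    exact hs.sup ht
  · obtain ⟨c, hc⟩ := (h x hx).bound
    obtain ⟨p, hp, q, hq, hpq⟩ := eventually_prod_iff.1 hc
    exact ⟨_, mem_nhdsWithin_of_mem_nhds hq, .of_bound c
      (eventually_prod_principal_iff.2 (hp.mono fun k hk y hy ↦ hpq hk hy))⟩

theorem tendstoLocallyUniformlyOn_iff_forall_tendsto_prod_nhds [UniformSpace E]
    {F : ι → X → E} {f : X → E} {Ω : Set X} (hΩ : IsOpen Ω) (hf : ContinuousOn f Ω) :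
    TendstoLocallyUniformlyOn F f φ Ω ↔
      ∀ z ∈ Ω, Tendsto (fun p : ι × X ↦ F p.1 p.2) (φ ×ˢ 𝓝 z) (𝓝 (f z)) := by
  rw [hΩ.tendstoLocallyUniformlyOn_iff_forall_tendsto]
  refine forall₂_congr fun z hz ↦ ?_
  have hfz : Tendsto (fun p : ι × X ↦ f p.2) (φ ×ˢ 𝓝 z) (𝓝 (f z)) :=
    (hf.continuousAt (hΩ.mem_nhds hz)).tendsto.comp tendsto_snd
  exact ⟨hfz.congr_uniformity, fun h ↦ (hfz.prodMk_nhds h).mono_right (nhds_le_uniformity _)⟩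

theorem continuousOn_of_forall_tendsto_prod_nhds [TopologicalSpace E] [RegularSpace E] [φ.NeBot]
    {F : ι → X → E} {f : X → E} {Ω : Set X} (hΩ : IsOpen Ω)
    (h : ∀ z ∈ Ω, Tendsto (fun p : ι × X ↦ F p.1 p.2) (φ ×ˢ 𝓝 z) (𝓝 (f z))) :
    ContinuousOn f Ω := by
  refine continuousOn_of_forall_continuousAt fun z hz ↦
    (closed_nhds_basis (f z)).tendsto_right_iff.2 fun C hC ↦ ?_
  filter_upwards [(eventually_swap_iff.1 ((h z hz).eventually hC.1)).curry,
    hΩ.mem_nhds hz] with w hw hwΩ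
  exact hC.2.mem_of_tendsto
    ((h w hwΩ).comp (tendsto_id.prodMk tendsto_const_nhds)) hw

end JointAsymptotics

section HolomorphicFamily

variable {ι E : Type*} {φ : Filter ι} [NormedAddCommGroup E] [NormedSpace ℂ E] {F : ι → ℂ → E}
  {Ω : Set ℂ} {x : ℂ}

theorem exists_mem_nhds_eventually_lipschitzOnWith (hΩ : IsOpen Ω)
    (hF : ∀ k, DifferentiableOn ℂ (F k) Ω) (hx : x ∈ Ω)
    (hb : (fun p : ι × ℂ ↦ F p.1 p.2) =O[φ ×ˢ 𝓝 x] fun _ ↦ (1 : ℝ)) :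
    ∃ L : ℝ≥0, ∃ s ∈ 𝓝 x, ∀ᶠ k in φ, LipschitzOnWith L (F k) s := by
  obtain ⟨B, hB⟩ := hb.bound
  obtain ⟨p, hp, q, hq, hpq⟩ := eventually_prod_iff.1 hB
  obtain ⟨r, hr, hrq⟩ := nhds_basis_closedBall.mem_iff.1 (inter_mem hq (hΩ.mem_nhds hx))
  have hsub : ∀ z ∈ ball x (r / 2), closedBall z (r / 2) ⊆ closedBall x r := fun z hz ↦
    closedBall_subset_closedBall' (by linarith [mem_ball.1 hz])
  refine ⟨(B / (r / 2)).toNNReal, _, ball_mem_nhds x (half_pos hr), hp.mono fun k hk ↦ ?_⟩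
  refine (convex_ball x (r / 2)).lipschitzOnWith_of_nnnorm_deriv_le (𝕜 := ℂ)
    (fun z hz ↦ (hF k).differentiableAt (hΩ.mem_nhds (hrq ?_).2)) fun z hz ↦ ?_
  · exact hsub z hz (mem_closedBall_self (half_pos hr).le)
  · refine NNReal.coe_le_coe.1 ((norm_deriv_le_of_forall_mem_sphere_norm_le (half_pos hr)
      ((hF k).mono fun w hw ↦ ?_).diffContOnCl fun w hw ↦ ?_).trans (Real.le_coe_toNNReal _))
    · exact (hrq (hsub z hz (closure_ball_subset_closedBall hw))).2
    · simpa using hpq hk (hrq (hsub z hz (sphere_subset_closedBall hw))).1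

theorem exists_tendsto_of_eventually_mem_isCompact {α : Type*} [TopologicalSpace α]
    (φ : Ultrafilter ι) {K : Set α} (hK : IsCompact K) {x : ι → α} (hx : ∀ᶠ k in φ, x k ∈ K) :
    ∃ a ∈ K, Tendsto x φ (𝓝 a) :=
  hK.ultrafilter_le_nhds (φ.map x) (le_principal_iff.2 hx)

theorem exists_tendstoLocallyUniformlyOn_ultrafilter [ProperSpace E] (φ : Ultrafilter ι)
    (hΩ : IsOpen Ω) (hF : ∀ k, DifferentiableOn ℂ (F k) Ω)
    (hb : ∀ z ∈ Ω, (fun p : ι × ℂ ↦ F p.1 p.2) =O[(φ : Filter ι) ×ˢ 𝓝 z] fun _ ↦ (1 : ℝ)) :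
    ∃ f, TendstoLocallyUniformlyOn F f φ Ω := by
  have hlim : ∀ z : ℂ, ∃ a, z ∈ Ω → Tendsto (F · z) φ (𝓝 a) := fun z ↦ by
    by_cases hz : z ∈ Ω
    · obtain ⟨B, hB⟩ := (hb z hz).bound
      obtain ⟨a, -, ha⟩ := exists_tendsto_of_eventually_mem_isCompact φ
        (isCompact_closedBall (0 : E) B) (x := (F · z)) <| hB.curry.mono fun k hk ↦ by
          simpa using hk.self_of_nhds
      exact ⟨a, fun _ ↦ ha⟩
    · exact ⟨0, fun h ↦ absurd h hz⟩
  choose f hf using hlim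
  have hjoint : ∀ z ∈ Ω, Tendsto (fun p : ι × ℂ ↦ F p.1 p.2) (φ ×ˢ 𝓝 z) (𝓝 (f z)) := by
    intro z hz
    obtain ⟨L, s, hs, hL⟩ := exists_mem_nhds_eventually_lipschitzOnWith hΩ hF hz (hb z hz)
    have hdist : Tendsto (fun p : ι × ℂ ↦ L * dist z p.2) (φ ×ˢ 𝓝 z) (𝓝 0) := by
      have : Tendsto (fun w ↦ L * dist z w) (𝓝 z) (𝓝 (L * dist z z)) :=
        Continuous.tendsto (by fun_prop) z
      simpa [comp_def] using this.comp tendsto_snd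
    refine ((hf z hz).comp tendsto_fst).congr_dist
      (squeeze_zero' (.of_forall fun _ ↦ dist_nonneg) ?_ hdist)
    filter_upwards [prod_mem_prod hL hs] with p hp
    exact hp.1.dist_le_mul z (mem_of_mem_nhds hs) p.2 hp.2
  exact ⟨f, (tendstoLocallyUniformlyOn_iff_forall_tendsto_prod_nhds hΩ
    (continuousOn_of_forall_tendsto_prod_nhds hΩ hjoint)).2 hjoint⟩

end HolomorphicFamily

section LargeDerivative

variable {U V : ℝ → ℝ} {L : ℝ≥0} {b c θ τ : ℝ}

theorem continuousOn_of_le_deriv {D : Set ℝ} (hc : 0 < c) (hV : ∀ t ∈ D, c ≤ deriv V t) :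
    ContinuousOn V D := fun t ht ↦
  (differentiableAt_of_deriv_ne_zero (hc.trans_le (hV t ht)).ne').continuousAt.continuousWithinAt

theorem mul_sub_le_sub_of_le_deriv {D : Set ℝ} (hD : Convex ℝ D) (hc : 0 < c)
    (hV : ∀ t ∈ D, c ≤ deriv V t) {s t : ℝ} (hs : s ∈ D) (ht : t ∈ D) (hst : s ≤ t) :
    c * (t - s) ≤ V t - V s :=
  hD.mul_sub_le_image_sub_of_le_deriv (continuousOn_of_le_deriv hc hV)
    (fun t ht ↦ (differentiableAt_of_deriv_ne_zero
      (hc.trans_le (hV t (interior_subset ht))).ne').differentiableWithinAt)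
    (fun t ht ↦ hV t (interior_subset ht)) s hs t ht hst

theorem mul_abs_sub_le_abs_sub_of_le_deriv {D : Set ℝ} (hD : Convex ℝ D) (hc : 0 < c)
    (hV : ∀ t ∈ D, c ≤ deriv V t) {s t : ℝ} (hs : s ∈ D) (ht : t ∈ D) :
    c * |t - s| ≤ |V t - V s| := by
  rcases le_total s t with h | h
  · rw [abs_of_nonneg (sub_nonneg.2 h)]
    exact (mul_sub_le_sub_of_le_deriv hD hc hV hs ht h).trans (le_abs_self _)
  · rw [abs_sub_comm, abs_of_nonneg (sub_nonneg.2 h), abs_sub_comm]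
    exact (mul_sub_le_sub_of_le_deriv hD hc hV ht hs h).trans (le_abs_self _)

theorem exists_mem_Icc_eq_zero_of_le_deriv (hτ : 0 ≤ τ) (hc : 0 < c)
    (hV : ∀ t ∈ Icc (θ - τ) (θ + τ), c ≤ deriv V t) (hθ : |V θ| ≤ c * τ) :
    ∃ s ∈ Icc (θ - τ) (θ + τ), V s = 0 := by
  have hcont := continuousOn_of_le_deriv hc hV
  have hslope := @mul_sub_le_sub_of_le_deriv _ _ _ (convex_Icc (θ - τ) (θ + τ)) hc hV
  have hmem : θ ∈ Icc (θ - τ) (θ + τ) := ⟨by linarith, by linarith⟩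
  have hleft := hslope ⟨le_rfl, by linarith⟩ hmem hmem.1
  have hright := hslope hmem ⟨by linarith, le_rfl⟩ hmem.2
  have hθ' := abs_le.1 hθ
  exact intermediate_value_Icc (hmem.1.trans hmem.2) hcont ⟨by linarith, by linarith⟩

theorem abs_le_div_mul_abs_of_le_deriv (hτ : 0 ≤ τ) (hc : 0 < c)
    (hU : LipschitzOnWith L U (Icc (θ - τ) (θ + τ)))
    (hV : ∀ t ∈ Icc (θ - τ) (θ + τ), c ≤ deriv V t) (hθ : |V θ| ≤ c * τ)
    (hZ : ∀ t ∈ Icc (θ - τ) (θ + τ), V t = 0 → U t = 0) {t : ℝ}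
    (ht : t ∈ Icc (θ - τ) (θ + τ)) : |U t| ≤ L / c * |V t| := by
  obtain ⟨s, hs, hVs⟩ := exists_mem_Icc_eq_zero_of_le_deriv hτ hc hV hθ
  have hUt := hU.dist_le_mul t ht s hs
  have hVt := mul_abs_sub_le_abs_sub_of_le_deriv (convex_Icc _ _) hc hV hs ht
  rw [Real.dist_eq, Real.dist_eq, hZ s hs hVs, sub_zero] at hUt
  rw [hVs, sub_zero] at hVt
  calc |U t| ≤ L * |t - s| := hUt
    _ = L / c * (c * |t - s|) := by field_simp
    _ ≤ L / c * |V t| := by gcongr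

variable {ι : Type*} {φ : Filter ι} {U V : ι → ℝ → ℝ}

theorem isBigO_of_tendsto_deriv_pos (hU : ∀ᶠ k in φ, LipschitzWith L (U k))
    (hZ : ∀ k t, V k t = 0 → U k t = 0) (hV : Tendsto (V · θ) φ (𝓝 0))
    (hV' : Tendsto (fun p : ι × ℝ ↦ deriv (V p.1) p.2) (φ ×ˢ 𝓝 θ) (𝓝 b)) (hb : 0 < b) :
    (fun p : ι × ℝ ↦ U p.1 p.2) =O[φ ×ˢ 𝓝 θ] fun p ↦ V p.1 p.2 := by
  obtain ⟨p, hp, q, hq, hpq⟩ := eventually_prod_iff.1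
    (hV'.eventually (le_mem_nhds (half_lt_self hb)))
  obtain ⟨τ, hτ, hτq⟩ := nhds_basis_closedBall.mem_iff.1 hq
  rw [Real.closedBall_eq_Icc] at hτq
  have hsmall : ∀ᶠ k in φ, |V k θ| ≤ b / 2 * τ :=
    hV.abs.eventually_le_const (by rw [abs_zero]; positivity)
  refine .of_bound (L / (b / 2)) ?_
  filter_upwards [prod_mem_prod (inter_mem hp (inter_mem hU hsmall))
    (Icc_mem_nhds (sub_lt_self θ hτ) (lt_add_of_pos_right θ hτ))] with ⟨k, t⟩ hkt
  exact abs_le_div_mul_abs_of_le_deriv hτ.le (half_pos hb) hkt.1.2.1.lipschitzOnWith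
    (fun t ht ↦ hpq hkt.1.1 (hτq ht)) hkt.1.2.2 (fun t _ ↦ hZ k t) hkt.2

theorem isBigO_of_tendsto_deriv_ne_zero (hU : ∀ᶠ k in φ, LipschitzWith L (U k))
    (hZ : ∀ k t, V k t = 0 → U k t = 0) (hV : Tendsto (V · θ) φ (𝓝 0))
    (hV' : Tendsto (fun p : ι × ℝ ↦ deriv (V p.1) p.2) (φ ×ˢ 𝓝 θ) (𝓝 b)) (hb : b ≠ 0) :
    (fun p : ι × ℝ ↦ U p.1 p.2) =O[φ ×ˢ 𝓝 θ] fun p ↦ V p.1 p.2 := by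
  rcases hb.lt_or_gt with hb | hb
  · have hneg := isBigO_of_tendsto_deriv_pos (V := fun k ↦ -V k) hU
      (fun k t h ↦ hZ k t (neg_eq_zero.1 h)) (by simpa using hV.neg)
      (by simpa [deriv.neg] using hV'.neg) (neg_pos.2 hb)
    exact isBigO_neg_right.1 hneg
  · exact isBigO_of_tendsto_deriv_pos hU hZ hV hV' hb

end LargeDerivative

section Domination

theorem deriv_re_comp_circleMap {f : ℂ → ℂ} {x : ℂ} {ρ t : ℝ}
    (hf : DifferentiableAt ℂ f (circleMap x ρ t)) :
    deriv (fun t ↦ (f (circleMap x ρ t)).re) t =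
      -((circleMap x ρ t - x) * deriv f (circleMap x ρ t)).im := by
  have h := reCLM.hasFDerivAt.comp_hasDerivAt t
    (hf.hasDerivAt.comp t (hasDerivAt_circleMap x ρ t))
  refine h.deriv.trans ?_
  rw [circleMap_sub_center, reCLM_apply, ← mul_assoc, mul_I_re, mul_comm]

variable {ι : Type*} {φ : Filter ι} [φ.NeBot] {F G : ι → ℂ → ℂ} {g : ℂ → ℂ} {Ω : Set ℂ} {x : ℂ}
  {ρ : ℝ}

theorem isBigO_re_comp_circleMap (hΩ : IsOpen Ω) (hρ : 0 ≤ ρ) (hsub : sphere x ρ ⊆ Ω) {L : ℝ≥0}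
    (hF : ∀ᶠ k in φ, LipschitzOnWith L (F k) (sphere x ρ))
    (hFb : ∀ z ∈ Ω, (fun p : ι × ℂ ↦ F p.1 p.2) =O[φ ×ˢ 𝓝 z] fun _ ↦ (1 : ℝ))
    (hG : ∀ k, DifferentiableOn ℂ (G k) Ω) (hGg : TendstoLocallyUniformlyOn G g φ Ω)
    (hZ : ∀ k, ∀ z ∈ Ω, (G k z).re = 0 → (F k z).re = 0)
    (hg : ∀ z ∈ sphere x ρ, (g z).re = 0 → ((z - x) * deriv g z).im ≠ 0) (θ : ℝ) :
    (fun p : ι × ℝ ↦ (F p.1 (circleMap x ρ p.2)).re) =O[φ ×ˢ 𝓝 θ]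
      fun p ↦ (G p.1 (circleMap x ρ p.2)).re := by
  have hc : ∀ t, circleMap x ρ t ∈ sphere x ρ := circleMap_mem_sphere x hρ
  have hgd : DifferentiableOn ℂ g Ω := hGg.differentiableOn (.of_forall hG) hΩ
  have hcirc : Tendsto (fun p : ι × ℝ ↦ (p.1, circleMap x ρ p.2)) (φ ×ˢ 𝓝 θ)
      (φ ×ˢ 𝓝 (circleMap x ρ θ)) :=
    tendsto_id.prodMap (continuous_circleMap x ρ).continuousAt
  have hGlim : Tendsto (fun p : ι × ℝ ↦ (G p.1 (circleMap x ρ p.2)).re) (φ ×ˢ 𝓝 θ)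
      (𝓝 (g (circleMap x ρ θ)).re) :=
    (continuous_re.tendsto _).comp (((tendstoLocallyUniformlyOn_iff_forall_tendsto_prod_nhds hΩ
      hgd.continuousOn).1 hGg _ (hsub (hc θ))).comp hcirc)
  by_cases h0 : (g (circleMap x ρ θ)).re = 0
  · refine isBigO_of_tendsto_deriv_ne_zero (L := L * Real.nnabs ρ)
      (U := fun k t ↦ (F k (circleMap x ρ t)).re) (V := fun k t ↦ (G k (circleMap x ρ t)).re)
      (hF.mono fun k hk ↦ ?_) (fun k t ↦ hZ k _ (hsub (hc t)))
      (h0 ▸ hGlim.comp (tendsto_id.prodMk tendsto_const_nhds)) ?_ (neg_ne_zero.2 (hg _ (hc θ) h0))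
    · have hlip := reCLM.lipschitz.comp_lipschitzOnWith
        (hk.comp (lipschitzWith_circleMap x ρ).lipschitzOnWith fun t (_ : t ∈ univ) ↦ hc t)
      rwa [lipschitzOnWith_univ, reCLM_nnnorm, one_mul] at hlip
    · simp_rw [deriv_re_comp_circleMap ((hG _).differentiableAt (hΩ.mem_nhds (hsub (hc _))))]
      have hderiv : Tendsto (fun p : ι × ℂ ↦ deriv (G p.1) p.2) (φ ×ˢ 𝓝 (circleMap x ρ θ))
          (𝓝 (deriv g (circleMap x ρ θ))) :=
        (tendstoLocallyUniformlyOn_iff_forall_tendsto_prod_nhds hΩ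
          (hgd.deriv hΩ).continuousOn).1 (hGg.deriv (.of_forall hG) hΩ) _ (hsub (hc θ))
      have hsubx : Tendsto (fun p : ι × ℝ ↦ circleMap x ρ p.2 - x) (φ ×ˢ 𝓝 θ)
          (𝓝 (circleMap x ρ θ - x)) :=
        (((continuous_circleMap x ρ).sub continuous_const).tendsto θ).comp tendsto_snd
      exact ((continuous_im.tendsto _).comp (hsubx.mul (hderiv.comp hcirc))).neg
  · refine isBigO_of_isBigO_one_of_tendsto_ne_zero ?_ hGlim h0
    exact (isBigO_of_le _ fun p ↦ abs_re_le_norm _).trans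
      ((hFb _ (hsub (hc θ))).comp_tendsto hcirc)

theorem isBigO_re_of_tendstoLocallyUniformlyOn (hΩ : IsOpen Ω)
    (hF : ∀ k, DifferentiableOn ℂ (F k) Ω)
    (hFb : ∀ z ∈ Ω, (fun p : ι × ℂ ↦ F p.1 p.2) =O[φ ×ˢ 𝓝 z] fun _ ↦ (1 : ℝ))
    (hG : ∀ k, DifferentiableOn ℂ (G k) Ω) (hGg : TendstoLocallyUniformlyOn G g φ Ω)
    (hg : ∃ᶠ z in 𝓝 x, (g z).re ≠ 0)
    (hZ : ∀ k, ∀ z ∈ Ω, (G k z).re = 0 → (F k z).re = 0) (hx : x ∈ Ω) :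
    (fun p : ι × ℂ ↦ (F p.1 p.2).re) =O[φ ×ˢ 𝓝 x] fun p ↦ (G p.1 p.2).re := by
  have hgd : DifferentiableOn ℂ g Ω := hGg.differentiableOn (.of_forall hG) hΩ
  obtain ⟨L, s, hs, hL⟩ := exists_mem_nhds_eventually_lipschitzOnWith hΩ hF hx (hFb x hx)
  have htransverse := eventually_im_sub_mul_deriv_ne_zero (hgd.analyticAt (hΩ.mem_nhds hx)) hg
  obtain ⟨ρ, hρ, hball⟩ := nhds_basis_closedBall.mem_iff.1
    (inter_mem (inter_mem hs (hΩ.mem_nhds hx)) (eventually_nhdsWithin_iff.1 htransverse))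
  have hsphere : sphere x ρ ⊆ closedBall x ρ := sphere_subset_closedBall
  have hcircle := isBigO_prod_principal_of_isCompact (isCompact_Icc (a := 0) (b := 2 * Real.pi))
    fun θ _ ↦ isBigO_re_comp_circleMap hΩ hρ.le (fun z hz ↦ (hball (hsphere hz)).1.2)
      (hL.mono fun k hk ↦ hk.mono fun z hz ↦ (hball (hsphere hz)).1.1) hFb hG hGg hZ
      (fun z hz ↦ (hball (hsphere hz)).2 (ne_of_mem_sphere hz hρ.ne')) θ
  obtain ⟨C, hC, hbound⟩ := hcircle.exists_pos
  refine .of_bound C ?_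
  filter_upwards [prod_mem_prod (eventually_prod_principal_iff.1 hbound.bound)
    (ball_mem_nhds x hρ)] with ⟨k, z⟩ hkz
  have hdiff : ∀ {f : ℂ → ℂ}, DifferentiableOn ℂ f Ω → DiffContOnCl ℂ f (ball x ρ) := fun hf ↦
    (hf.mono fun z hz ↦ (hball (closure_ball_subset_closedBall hz)).1.2).diffContOnCl
  refine abs_re_le_mul_abs_re_of_forall_mem_frontier isOpen_ball isBounded_ball (hdiff (hF k))
    (hdiff (hG k)) hC (fun w hw ↦ ?_)
    (fun w hw ↦ hZ k w (hball (ball_subset_closedBall hw)).1.2) hkz.2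
  rw [frontier_ball x hρ.ne'] at hw
  obtain ⟨t, ht, rfl⟩ : w ∈ circleMap x ρ '' Ioc 0 (2 * Real.pi) := by
    rwa [image_circleMap_Ioc, abs_of_pos hρ]
  exact hkz.1 t (Ioc_subset_Icc_self ht)

end Domination

/-! ### The normal family -/

section NormalizedNodal

theorem nodalComplement_congr {f g : ℂ → ℂ} {Ω : Set ℂ}
    (h : ∀ z ∈ Ω, (f z).re = 0 ↔ (g z).re = 0) : nodalComplement f Ω = nodalComplement g Ω :=
  Set.ext fun z ↦ and_congr_right fun hz ↦ not_congr (h z hz)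

/-- Holomorphic functions on the unit disc whose real part has at most `N` nodal domains,
normalized to have real part of maximum modulus `1` on the disc of radius `1 / 2` and real value
at the origin. This is the normal family of the compactness argument. -/
structure IsNormalizedNodal (N : ℕ) (f : ℂ → ℂ) : Prop where
  differentiableOn : DifferentiableOn ℂ f (ball 0 1)
  im_zero : (f 0).im = 0
  abs_re_le : ∀ z ∈ closedBall (0 : ℂ) (1 / 2), |(f z).re| ≤ 1
  exists_abs_re_eq : ∃ z ∈ closedBall (0 : ℂ) (1 / 2), |(f z).re| = 1
  card_le : ENat.card (ZerothHomotopy (nodalComplement f (ball 0 1))) ≤ N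

variable {N : ℕ}

theorem IsNormalizedNodal.norm_le_five {f : ℂ → ℂ} (hf : IsNormalizedNodal N f) {z : ℂ}
    (hz : z ∈ ball (0 : ℂ) (1 / 4)) : ‖f z‖ ≤ 5 := by
  have h0 : ‖f 0‖ ≤ 1 := by
    rw [← abs_re_eq_norm.2 hf.im_zero]
    exact hf.abs_re_le 0 (mem_closedBall_self (by norm_num))
  rw [mem_ball_zero_iff] at hz
  have hbc := borelCaratheodory (f := f) (z := z) (M := 1) (R := 1 / 2) one_pos
    (hf.differentiableOn.mono (ball_subset_ball (by norm_num)))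
    (fun w hw ↦ (le_abs_self _).trans (hf.abs_re_le w (ball_subset_closedBall hw)))
    (by norm_num) (mem_ball_zero_iff.2 (by linarith))
  have hpos : 0 < 1 / 2 - ‖z‖ := by linarith
  refine hbc.trans ?_
  rw [← add_div, div_le_iff₀ hpos]
  nlinarith [norm_nonneg z, norm_nonneg (f 0)]

variable (N) in
theorem IsNormalizedNodal.exists_bound {R : ℝ} (hR : R < 1) :
    ∃ B, ∀ f, IsNormalizedNodal N f → ∀ z ∈ ball (0 : ℂ) R, ‖f z‖ ≤ B := by
  obtain ⟨B, hB⟩ := exists_bound_of_card_nodalComplement_le N (r := 1 / 4) (R := max R (1 / 4))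
    (by norm_num) (le_max_right _ _) (max_lt hR (by norm_num)) 5
  exact ⟨B, fun f hf z hz ↦ hB f hf.differentiableOn hf.card_le (fun w hw ↦ hf.norm_le_five hw) z
    (ball_subset_ball (le_max_left _ _) hz)⟩

theorem IsNormalizedNodal.isBigO_one {ι : Type*} {φ : Filter ι} {F : ι → ℂ → ℂ}
    (hF : ∀ k, IsNormalizedNodal N (F k)) {z : ℂ} (hz : z ∈ ball (0 : ℂ) 1) :
    (fun p : ι × ℂ ↦ F p.1 p.2) =O[φ ×ˢ 𝓝 z] fun _ ↦ (1 : ℝ) := by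
  obtain ⟨R, hzR, hR⟩ := exists_between (mem_ball_zero_iff.1 hz)
  obtain ⟨B, hB⟩ := IsNormalizedNodal.exists_bound N hR
  refine .of_bound B ?_
  filter_upwards [prod_mem_prod univ_mem (isOpen_ball.mem_nhds (mem_ball_zero_iff.2 hzR))]
    with p hp
  simpa using hB _ (hF p.1) p.2 hp.2

theorem IsNormalizedNodal.exists_re_ne_zero_of_tendsto {ι : Type*} {φ : Ultrafilter ι}
    {G : ι → ℂ → ℂ} {g : ℂ → ℂ} (hG : ∀ k, IsNormalizedNodal N (G k))
    (hGg : TendstoLocallyUniformlyOn G g φ (ball 0 1)) :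
    ∃ z ∈ ball (0 : ℂ) 1, (g z).re ≠ 0 := by
  have hgd := hGg.differentiableOn (.of_forall fun k ↦ (hG k).differentiableOn) isOpen_ball
  choose y hy hy1 using fun k ↦ (hG k).exists_abs_re_eq
  obtain ⟨y₀, hy₀, hlim⟩ := exists_tendsto_of_eventually_mem_isCompact φ
    (isCompact_closedBall (0 : ℂ) (1 / 2)) (.of_forall hy)
  have hyD : y₀ ∈ ball (0 : ℂ) 1 := closedBall_subset_ball (by norm_num) hy₀
  have hGy := ((tendstoLocallyUniformlyOn_iff_forall_tendsto_prod_nhds isOpen_ball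
    hgd.continuousOn).1 hGg y₀ hyD).comp (tendsto_id.prodMk hlim)
  have hone : |(g y₀).re| = 1 := tendsto_nhds_unique ((continuous_re.tendsto _).comp hGy).abs
    (tendsto_const_nhds.congr fun k ↦ (hy1 k).symm)
  exact ⟨y₀, hyD, fun h ↦ by simp [h] at hone⟩

variable (N) in
theorem IsNormalizedNodal.exists_forall_abs_re_le {K : Set ℂ} (hK : IsCompact K)
    (hKD : K ⊆ ball 0 1) :
    ∃ C > 0, ∀ f g, IsNormalizedNodal N f → IsNormalizedNodal N g →
      (∀ z ∈ ball (0 : ℂ) 1, (g z).re = 0 → (f z).re = 0) →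
      ∀ z ∈ K, |(f z).re| ≤ C * |(g z).re| := by
  by_contra! hcon
  choose F G hF hG hZ x hxK hx using fun k : ℕ ↦ hcon (k + 1) k.cast_add_one_pos
  obtain ⟨g, hGg⟩ := exists_tendstoLocallyUniformlyOn_ultrafilter (hyperfilter ℕ) isOpen_ball
    (fun k ↦ (hG k).differentiableOn) fun z hz ↦ isBigO_one hG hz
  have hgd := hGg.differentiableOn (.of_forall fun k ↦ (hG k).differentiableOn) isOpen_ball
  have hdom := isBigO_prod_principal_of_isCompact hK fun z hz ↦
    isBigO_re_of_tendstoLocallyUniformlyOn isOpen_ball (fun k ↦ (hF k).differentiableOn)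
      (fun w hw ↦ isBigO_one hF hw) (fun k ↦ (hG k).differentiableOn) hGg
      (frequently_re_ne_zero (convex_ball 0 1).isPreconnected (hgd.analyticOnNhd isOpen_ball)
        (exists_re_ne_zero_of_tendsto hG hGg) (hKD hz)) hZ (hKD hz)
  obtain ⟨C, hC⟩ := hdom.bound
  have hlarge : ∀ᶠ k : ℕ in hyperfilter ℕ, C ≤ k :=
    Nat.hyperfilter_le_atTop (tendsto_natCast_atTop_atTop.eventually_ge_atTop C)
  obtain ⟨k, hk, hCk⟩ := ((eventually_prod_principal_iff.1 hC).and hlarge).exists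
  refine (hx k).not_ge ((hk (x k) (hxK k)).trans ?_)
  exact mul_le_mul_of_nonneg_right (by linarith) (norm_nonneg _)

theorem exists_isNormalizedNodal {f : ℂ → ℂ} (hf : DifferentiableOn ℂ f (ball 0 1))
    (hne : ∃ z ∈ ball (0 : ℂ) 1, (f z).re ≠ 0)
    (hN : ENat.card (ZerothHomotopy (nodalComplement f (ball 0 1))) ≤ N) :
    ∃ α > 0, ∃ F : ℂ → ℂ, IsNormalizedNodal N F ∧ ∀ z, (F z).re = (f z).re / α := by
  obtain ⟨z₀, hz₀, hmax⟩ := (isCompact_closedBall (0 : ℂ) (1 / 2)).exists_isMaxOn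
    (nonempty_closedBall.2 (by norm_num)) (f := fun z ↦ |(f z).re|)
    (continuous_abs.comp_continuousOn (continuous_re.comp_continuousOn
      (hf.continuousOn.mono (closedBall_subset_ball (by norm_num)))))
  set α := |(f z₀).re|
  have hα : 0 < α := by
    obtain ⟨z, hz0, hz⟩ := ((frequently_re_ne_zero (convex_ball 0 1).isPreconnected
      (hf.analyticOnNhd isOpen_ball) hne (mem_ball_self one_pos)).and_eventually
        (closedBall_mem_nhds (0 : ℂ) one_half_pos)).exists
    exact (abs_pos.2 hz0).trans_le (hmax hz)
  have hre : ∀ z, ((f z - (f 0).im * I) / α).re = (f z).re / α := fun z ↦ by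
    rw [div_ofReal_re]; simp
  refine ⟨α, hα, fun z ↦ (f z - (f 0).im * I) / α, ⟨(hf.sub_const _).div_const _, ?_,
    fun z hz ↦ ?_, ⟨z₀, hz₀, ?_⟩, ?_⟩, hre⟩
  · rw [div_ofReal_im]; simp
  · rw [hre, abs_div, abs_of_pos hα, div_le_one hα]
    exact hmax hz
  · rw [hre, abs_div, abs_of_pos hα, div_self hα.ne']
  · rwa [nodalComplement_congr (g := f) fun z _ ↦ by rw [hre, div_eq_zero_iff, or_iff_left hα.ne']]

variable (N) in
theorem exists_forall_abs_re_div_re_le {K : Set ℂ} (hK : IsCompact K) (hKD : K ⊆ ball 0 1) :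
    ∃ C > 0, ∀ f g : ℂ → ℂ, DifferentiableOn ℂ f (ball 0 1) → DifferentiableOn ℂ g (ball 0 1) →
      (∀ z ∈ ball (0 : ℂ) 1, (f z).re = 0 ↔ (g z).re = 0) →
      ENat.card (ZerothHomotopy (nodalComplement f (ball 0 1))) ≤ N →
      ∀ z ∈ K, ∀ w ∈ K, (f z).re ≠ 0 → (f w).re ≠ 0 →
        |(f z).re / (g z).re| ≤ C * |(f w).re / (g w).re| := by
  obtain ⟨C, hC0, hC⟩ := IsNormalizedNodal.exists_forall_abs_re_le N hK hKD
  refine ⟨C * C, mul_pos hC0 hC0, fun f g hf hg hZ hN z hz w hw hfz hfw ↦ ?_⟩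
  have hgz : (g z).re ≠ 0 := mt (hZ z (hKD hz)).2 hfz
  have hgw : (g w).re ≠ 0 := mt (hZ w (hKD hw)).2 hfw
  obtain ⟨α, hα, F, hF, hFf⟩ := exists_isNormalizedNodal hf ⟨z, hKD hz, hfz⟩ hN
  obtain ⟨β, hβ, G, hG, hGg⟩ := exists_isNormalizedNodal hg ⟨z, hKD hz, hgz⟩
    (nodalComplement_congr hZ ▸ hN)
  have hFG : ∀ z ∈ ball (0 : ℂ) 1, (F z).re = 0 ↔ (G z).re = 0 := fun z hz ↦ by
    rw [hFf, hGg, div_eq_zero_iff, div_eq_zero_iff, or_iff_left hα.ne', or_iff_left hβ.ne', hZ z hz]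
  have hz' := hC F G hF hG (fun z hz ↦ (hFG z hz).2) z hz
  have hw' := hC G F hG hF (fun z hz ↦ (hFG z hz).1) w hw
  rw [hFf, hGg, abs_div, abs_div, abs_of_pos hα, abs_of_pos hβ] at hz' hw'
  have hupper : |(f z).re| / |(g z).re| ≤ C * (α / β) := by
    rw [div_le_iff₀ (abs_pos.2 hgz)]
    rw [div_le_iff₀ hα] at hz'
    exact hz'.trans_eq (by ring)
  have hlower : α / β ≤ C * (|(f w).re| / |(g w).re|) := by
    rw [div_le_iff₀ hβ] at hw'
    rw [← mul_div_assoc, div_le_div_iff₀ hβ (abs_pos.2 hgw)]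
    calc α * |(g w).re| ≤ α * (C * (|(f w).re| / α) * β) := by gcongr
      _ = C * |(f w).re| * β := by field_simp
  rw [abs_div, abs_div]
  calc |(f z).re| / |(g z).re| ≤ C * (α / β) := hupper
    _ ≤ C * (C * (|(f w).re| / |(g w).re|)) := by gcongr
    _ = C * C * (|(f w).re| / |(g w).re|) := by ring

end NormalizedNodal

/-! ### Passage from the plane to `ℂ` -/

section PlaneTransfer

theorem joinedIn_iff_connectedComponentIn_eq {X : Type*} [TopologicalSpace X]
    [LocallyPathConnectedSpace X] {O : Set X} (hO : IsOpen O) {x y : X} (hx : x ∈ O) (hy : y ∈ O) :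
    JoinedIn O x y ↔ connectedComponentIn O x = connectedComponentIn O y := by
  refine ⟨fun h ↦ connectedComponentIn_eq ?_, fun h ↦ ?_⟩
  · have hpath := isPathConnected_pathComponentIn hx
    exact hpath.isConnected.isPreconnected.subset_connectedComponentIn
      (mem_pathComponentIn_self hx) pathComponentIn_subset h
  · have hpath := hO.connectedComponentIn.isConnected_iff_isPathConnected.1
      (isConnected_connectedComponentIn_iff.2 hx)
    exact (hpath.joinedIn x (mem_connectedComponentIn hx) y
      (h ▸ mem_connectedComponentIn hy)).mono (connectedComponentIn_subset O x)

theorem card_zerothHomotopy_preimage_le_encard {X Y : Type*} [TopologicalSpace X]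
    [LocallyPathConnectedSpace X] [TopologicalSpace Y] (e : Y ≃ₜ X) {O : Set X} (hO : IsOpen O) :
    ENat.card (ZerothHomotopy (e ⁻¹' O)) ≤ {C | ∃ x ∈ O, C = connectedComponentIn O x}.encard := by
  have hjoined : ∀ x y : e ⁻¹' O,
      Joined x y ↔ connectedComponentIn O (e x) = connectedComponentIn O (e y) := fun x y ↦ by
    rw [← joinedIn_iff_joined x.2 y.2, ← joinedIn_iff_connectedComponentIn_eq hO x.2 y.2]
    refine ⟨fun h ↦ (h.map e.continuous).mono (image_preimage_subset e O), fun h ↦ ?_⟩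
    simpa using (h.map e.symm.continuous).mono (congrFun e.image_symm O).subset
  refine ENat.card_le_card_of_injective (f := ZerothHomotopy.lift
    (fun x : e ⁻¹' O ↦ (⟨connectedComponentIn O (e x), e x, x.2, rfl⟩ :
      {C | ∃ x ∈ O, C = connectedComponentIn O x}))
    fun x y γ ↦ Subtype.ext ((hjoined x y).1 ⟨γ⟩)) ?_
  rintro ⟨x⟩ ⟨y⟩ hxy
  exact Quotient.sound ((hjoined x y).2 (congrArg Subtype.val hxy))

theorem repr_orthonormalBasisOneI_mem_ball {z : ℂ} {r : ℝ} :
    orthonormalBasisOneI.repr z ∈ ball 0 r ↔ z ∈ ball 0 r := by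
  rw [mem_ball_zero_iff, mem_ball_zero_iff, LinearIsometryEquiv.norm_map]

variable {u : En 2 → ℝ}

theorem HarmonicOnSet.harmonicOnNhd_comp_repr {r : ℝ} (hu : HarmonicOnSet u (ball 0 r)) :
    InnerProductSpace.HarmonicOnNhd (u ∘ orthonormalBasisOneI.repr) (ball 0 r) := by
  intro z hz
  have hz' := repr_orthonormalBasisOneI_mem_ball.2 hz
  refine ⟨((hu.1 _ hz').contDiffAt (isOpen_ball.mem_nhds hz')).comp z
    orthonormalBasisOneI.repr.contDiff.contDiffAt, ?_⟩
  filter_upwards [isOpen_ball.mem_nhds hz] with w hw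
  rw [InnerProductSpace.laplacian_eq_iteratedFDeriv_orthonormalBasis _ orthonormalBasisOneI,
    Pi.zero_apply, ← hu.2 _ (repr_orthonormalBasisOneI_mem_ball.2 hw), laplacianAt]
  refine Finset.sum_congr rfl fun i _ ↦ ?_
  have hcomp := orthonormalBasisOneI.repr.toContinuousLinearEquiv.iteratedFDerivWithin_comp_right u
    uniqueDiffOn_univ (mem_univ (orthonormalBasisOneI.repr w)) 2
  rw [preimage_univ, iteratedFDerivWithin_univ, iteratedFDerivWithin_univ] at hcomp
  refine (congrArg (fun T ↦ T ![orthonormalBasisOneI i, orthonormalBasisOneI i]) hcomp).trans ?_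
  rw [ContinuousMultilinearMap.compContinuousLinearMap_apply]
  congr 1
  ext j : 1
  fin_cases j <;> exact orthonormalBasisOneI.repr_self i

theorem HarmonicOnSet.exists_differentiableOn_re_eq {r : ℝ} (hu : HarmonicOnSet u (ball 0 r)) :
    ∃ f : ℂ → ℂ, DifferentiableOn ℂ f (ball 0 r) ∧
      ∀ z ∈ ball 0 r, (f z).re = u (orthonormalBasisOneI.repr z) := by
  obtain ⟨f, hf, hfu⟩ := hu.harmonicOnNhd_comp_repr.exists_analyticOnNhd_ball_re_eq
  exact ⟨f, hf.differentiableOn, hfu⟩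

theorem card_nodalComplement_le_encard {r : ℝ} (hu : ContinuousOn u (ball 0 r)) {f : ℂ → ℂ}
    (hf : ∀ z ∈ ball 0 r, (f z).re = u (orthonormalBasisOneI.repr z)) :
    ENat.card (ZerothHomotopy (nodalComplement f (ball 0 r))) ≤
      (nodalComponents u (ball 0 r)).encard := by
  have hdiff : ball 0 r \ zeroSet u (ball 0 r) = ball 0 r ∩ u ⁻¹' {0}ᶜ := by
    ext x
    exact and_congr_right fun hx ↦ not_congr (and_iff_right hx)
  have hopen : IsOpen (ball 0 r \ zeroSet u (ball 0 r)) :=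
    hdiff ▸ hu.isOpen_inter_preimage isOpen_ball isOpen_compl_singleton
  have hpre : nodalComplement f (ball 0 r) =
      orthonormalBasisOneI.repr.toHomeomorph ⁻¹' (ball 0 r \ zeroSet u (ball 0 r)) := by
    ext z
    rw [hdiff]
    refine (and_congr_right fun hz ↦ ?_).trans
      (and_congr_left' repr_orthonormalBasisOneI_mem_ball.symm)
    rw [hf z hz]
    rfl
  rw [hpre]
  exact card_zerothHomotopy_preimage_le_encard _ hopen

end PlaneTransfer

end

theorem stmt0 (N : ℕ) (K : Set (En 2)) (hK : IsCompact K) (hKD : K ⊆ ball (0 : En 2) 1) :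
    ∃ C₁ > (0 : ℝ), ∀ u v : En 2 → ℝ,
      HarmonicOnSet u (ball 0 1) → HarmonicOnSet v (ball 0 1) →
      (∃ x ∈ ball (0 : En 2) 1, u x ≠ 0) → (∃ x ∈ ball (0 : En 2) 1, v x ≠ 0) →
      zeroSet u (ball 0 1) = zeroSet v (ball 0 1) →
      (nodalComponents u (ball 0 1)).Finite →
      (nodalComponents u (ball 0 1)).ncard < N →
      ∀ x ∈ K \ zeroSet u (ball 0 1), ∀ y ∈ K \ zeroSet u (ball 0 1),
        |u x / v x| ≤ C₁ * |u y / v y| := by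
  let e := Complex.orthonormalBasisOneI.repr
  have hball : ∀ {z}, e z ∈ ball 0 1 ↔ z ∈ ball 0 1 := repr_orthonormalBasisOneI_mem_ball
  obtain ⟨C, hC0, hC⟩ := exists_forall_abs_re_div_re_le N
    (e.toHomeomorph.isCompact_preimage.2 hK) fun z hz ↦ hball.1 (hKD hz)
  refine ⟨C, hC0, fun u v hu hv _ _ hZ hfin hN x hx y hy ↦ ?_⟩
  obtain ⟨f, hf, hfu⟩ := hu.exists_differentiableOn_re_eq
  obtain ⟨g, hg, hgv⟩ := hv.exists_differentiableOn_re_eq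
  have hfg : ∀ z ∈ ball 0 1, (f z).re = 0 ↔ (g z).re = 0 := fun z hz ↦ by
    rw [hfu z hz, hgv z hz]
    exact and_congr_right_iff.1 (Set.ext_iff.1 hZ (e z)) (hball.2 hz)
  have hcard : ENat.card (ZerothHomotopy (nodalComplement f (ball 0 1))) ≤ N :=
    (card_nodalComplement_le_encard hu.1.continuousOn hfu).trans
      (hfin.cast_ncard_eq ▸ Nat.cast_le.2 hN.le)
  have hne : ∀ z, e z ∈ K \ zeroSet u (ball 0 1) → (f z).re ≠ 0 := fun z hz h ↦
    hz.2 ⟨hKD hz.1, hfu z (hball.1 (hKD hz.1)) ▸ h⟩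
  obtain ⟨z, rfl⟩ := e.surjective x
  obtain ⟨w, rfl⟩ := e.surjective y
  have hzw := hC f g hf hg hfg hcard z hx.1 w hy.1 (hne z hx) (hne w hy)
  have hz := hball.1 (hKD hx.1)
  have hw := hball.1 (hKD hy.1)
  rwa [hfu z hz, hgv z hz, hfu w hw, hgv w hw] at hzw
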